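/- arXiv:1011.5780 — 3 statements merged into one kernel-verified Lean document; each statement's English description precedes it below -/
import Mathlib

section
/- Let V be a finite-dimensional real inner product space and n a positive integer. For each k with 1 ≤ k ≤ n, let Γ_k ⊆ V be a finitely generated cone and B_k ⊆ V a compact subset. Then there exists a compact subset B ⊆ V such that ⋂_{k=1}^n (B_k + Γ_k) ⊆ B + ⋂_{k=1}^n Γ_k. -/
/-!
Write a point `x` of the intersection as `b_k + γ_k` with `γ_k = ∑ i, r_{k,i} ω_{k,i}` and `r ≥ 0`.
The linear map `L r = (γ_k(r) - γ_0(r))_k` then takes the bounded value `(b_0 - b_k)_k`, and every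
`s ≥ 0` in its kernel yields one vector `γ_0(s) = γ_k(s)` lying in all the cones. So it suffices to
split `r = t + s` with `s, t ≥ 0`, `L s = 0` and `‖t‖ ≤ C ‖L r‖`, where `C` depends only on `L`
(`exists_kernel_part`): then `x - γ_0(s) = b_0 + γ_0(t)` is bounded.

For the splitting, take `s` with maximal coordinate sum among the kernel vectors with
`0 ≤ s ≤ r`. By maximality, no nonzero nonnegative vector supported in the support `S` of
`t = r - s` lies in the kernel, so `‖L ·‖` is bounded below on the compact set of nonnegative unit
vectors supported in `S` (`exists_bound_of_support`). There are only finitely many supports `S`.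
-/

open scoped Pointwise

/-- A cone is finitely generated if it is the set of nonnegative combinations of
finitely many vectors. -/
def IsFinGenCone {V : Type*} [AddCommGroup V] [Module ℝ V] (Γ : Set V) : Prop :=
  ∃ (m : ℕ) (ω : Fin m → V),
    Γ = {x | ∃ r : Fin m → ℝ, (∀ i, 0 ≤ r i) ∧ x = ∑ i, r i • ω i}

lemma exists_bound_of_support {J W : Type*} [Fintype J] [NormedAddCommGroup W] [NormedSpace ℝ W]
    (L : (J → ℝ) →ₗ[ℝ] W) (S : Finset J)
    (hS : ∀ z : J → ℝ, 0 ≤ z → (∀ j ∉ S, z j = 0) → L z = 0 → z = 0) :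
    ∃ C : ℝ, 0 ≤ C ∧ ∀ t : J → ℝ, 0 ≤ t → (∀ j ∉ S, t j = 0) → ‖t‖ ≤ C * ‖L t‖ := by
  have hL : Continuous L := L.continuous_of_finiteDimensional
  have hK : IsCompact (Metric.sphere (0 : J → ℝ) 1 ∩
      ({t | 0 ≤ t} ∩ ⋂ j, ⋂ (_ : j ∉ S), {t : J → ℝ | t j = 0})) := by
    refine (isCompact_sphere _ _).inter_right ((isClosed_le continuous_const continuous_id).inter ?_)
    exact isClosed_iInter fun j => isClosed_iInter fun _ =>
      isClosed_eq (continuous_apply j) continuous_const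
  obtain ⟨a, ha, hle⟩ := hK.exists_forall_le' (f := fun t => ‖L t‖) hL.norm.continuousOn (a := 0) (by
    rintro t ⟨h1, h2, h3⟩
    simp only [Set.mem_iInter, Set.mem_ofPred_eq] at h2 h3
    rw [norm_pos_iff]
    intro h0
    rw [hS t h2 h3 h0] at h1
    simp at h1)
  refine ⟨a⁻¹, by positivity, fun t ht hts => ?_⟩
  by_cases h0 : t = 0
  · simp [h0]
  have hn : 0 < ‖t‖ := norm_pos_iff.2 h0
  have := hle (‖t‖⁻¹ • t) ⟨by simp [norm_smul, hn.ne'], smul_nonneg (by positivity) ht, by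
    simp only [Set.mem_iInter, Set.mem_ofPred_eq]
    intro j hj
    simp [hts j hj]⟩
  simp only [map_smul, norm_smul, norm_inv, norm_norm] at this
  rw [inv_mul_eq_div, le_div_iff₀ hn] at this
  rw [inv_mul_eq_div, le_div_iff₀ ha]
  linarith

/-- Up to a nonnegative kernel vector `s ≤ r`, a nonnegative vector `r` is controlled by its image
under `L`, uniformly in `r`. -/
lemma exists_kernel_part {J W : Type*} [Fintype J] [NormedAddCommGroup W] [NormedSpace ℝ W]
    (L : (J → ℝ) →ₗ[ℝ] W) :
    ∃ C : ℝ, 0 ≤ C ∧ ∀ r : J → ℝ, 0 ≤ r →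
      ∃ s : J → ℝ, 0 ≤ s ∧ s ≤ r ∧ L s = 0 ∧ ‖r - s‖ ≤ C * ‖L r‖ := by
  classical
  have hL : Continuous L := L.continuous_of_finiteDimensional
  have key : ∀ S : Finset J, ∃ C : ℝ, 0 ≤ C ∧
      ((∀ z : J → ℝ, 0 ≤ z → (∀ j ∉ S, z j = 0) → L z = 0 → z = 0) →
        ∀ t : J → ℝ, 0 ≤ t → (∀ j ∉ S, t j = 0) → ‖t‖ ≤ C * ‖L t‖) := by
    intro S
    by_cases hS : ∀ z : J → ℝ, 0 ≤ z → (∀ j ∉ S, z j = 0) → L z = 0 → z = 0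
    · obtain ⟨C, h0, h⟩ := exists_bound_of_support L S hS
      exact ⟨C, h0, fun _ => h⟩
    · exact ⟨0, le_rfl, fun h => absurd h hS⟩
  choose C hC0 hC using key
  refine ⟨∑ S, C S, Finset.sum_nonneg fun S _ => hC0 S, fun r hr => ?_⟩
  have hK : IsCompact (Set.Icc 0 r ∩ {s | L s = 0}) :=
    isCompact_Icc.inter_right (isClosed_eq hL continuous_const)
  obtain ⟨s, ⟨⟨hs0, hsr⟩, hLs⟩, hmax⟩ := hK.exists_isMaxOn ⟨0, ⟨le_rfl, hr⟩, map_zero L⟩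
    (f := fun s => ∑ j, s j) (by fun_prop)
  rw [Set.mem_ofPred_eq] at hLs
  refine ⟨s, hs0, hsr, hLs, ?_⟩
  have hrs : ∀ j ∉ Finset.univ.filter (fun j => s j < r j), (r - s) j = 0 := by
    intro j hj
    have := hsr j
    simp only [Finset.mem_filter, Finset.mem_univ, true_and, not_lt] at hj
    simp only [Pi.sub_apply]
    linarith
  have hb := hC (Finset.univ.filter fun j => s j < r j) (by
    intro z hz hzs hLz
    -- A small multiple of `z` can be added to `s` without exceeding `r`.
    have hev : ∀ᶠ ε : ℝ in nhdsWithin 0 (Set.Ioi 0), ∀ j, s j + ε * z j ≤ r j := by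
      rw [Filter.eventually_all]
      intro j
      by_cases hj : s j < r j
      · have : Filter.Tendsto (fun ε : ℝ => s j + ε * z j) (nhds 0) (nhds (s j + 0 * z j)) :=
          Continuous.tendsto (by fun_prop) 0
        have := this.eventually_lt_const (u := r j) (by simpa using hj)
        exact (this.filter_mono nhdsWithin_le_nhds).mono fun _ h => h.le
      · rw [hzs j (by simpa using hj)]
        simpa using hsr j
    obtain ⟨ε, hε, hpos⟩ := (hev.and self_mem_nhdsWithin).exists
    have hpos : 0 < ε := hpos
    have hm : ∑ j, (s + ε • z) j ≤ ∑ j, s j :=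
      hmax ⟨⟨add_nonneg hs0 (smul_nonneg hpos.le hz), hε⟩, by simp [hLs, hLz]⟩
    simp only [Pi.add_apply, Pi.smul_apply, smul_eq_mul, Finset.sum_add_distrib,
      ← Finset.mul_sum] at hm
    have hz0 : ∑ j, z j = 0 :=
      le_antisymm (by by_contra! h; nlinarith [mul_pos hpos h]) (Finset.sum_nonneg fun j _ => hz j)
    funext j
    exact (Finset.sum_eq_zero_iff_of_nonneg fun j _ => hz j).1 hz0 j (Finset.mem_univ j))
    (r - s) (sub_nonneg.2 hsr) hrs
  rw [map_sub, hLs, sub_zero] at hb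
  refine hb.trans (mul_le_mul_of_nonneg_right ?_ (norm_nonneg _))
  exact Finset.single_le_sum (fun S _ => hC0 S) (Finset.mem_univ _)

theorem stmt5 (V : Type*) [NormedAddCommGroup V] [InnerProductSpace ℝ V]
    [FiniteDimensional ℝ V] (n : ℕ) (hn : 0 < n) (Γ B : Fin n → Set V)
    (hΓ : ∀ k, IsFinGenCone (Γ k)) (hB : ∀ k, IsCompact (B k)) :
    ∃ C : Set V, IsCompact C ∧ (⋂ k, (B k + Γ k)) ⊆ C + ⋂ k, Γ k := by
  choose m ω hω using hΓ
  let k₀ : Fin n := ⟨0, hn⟩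
  obtain ⟨M, hM⟩ := (Bornology.isBounded_iUnion.2 fun k => (hB k).isBounded).exists_norm_le
  have hM : ∀ k, ∀ b ∈ B k, ‖b‖ ≤ M := fun k b hb => hM b (Set.mem_iUnion.2 ⟨k, hb⟩)
  -- `g k r` is the combination of the generators of the `k`-th cone with coefficients from `r`.
  let g : Fin n → ((Σ k, Fin (m k)) → ℝ) →ₗ[ℝ] V := fun k =>
    ∑ i, (LinearMap.proj (R := ℝ) (φ := fun _ => ℝ) (⟨k, i⟩ : Σ k, Fin (m k))).smulRight (ω k i)
  have hg : ∀ k r, g k r = ∑ i, r ⟨k, i⟩ • ω k i := fun k r => by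
    simp [g, LinearMap.sum_apply]
  obtain ⟨C, hC0, hC⟩ := exists_kernel_part (LinearMap.pi fun k => g k - g k₀)
  let G := LinearMap.toContinuousLinearMap (g k₀)
  refine ⟨Metric.closedBall 0 (M + ‖G‖ * (C * (M + M))), isCompact_closedBall _ _, fun x hx => ?_⟩
  have hx' : ∀ k, ∃ b ∈ B k, ∃ r : Fin (m k) → ℝ, (∀ i, 0 ≤ r i) ∧ b + ∑ i, r i • ω k i = x := by
    intro k
    obtain ⟨b, hb, c, hc, h⟩ := Set.mem_iInter.1 hx k
    rw [hω k] at hc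
    obtain ⟨r, hr, rfl⟩ := hc
    exact ⟨b, hb, r, hr, h⟩
  choose b hb ρ hρ hx' using hx'
  obtain ⟨s, hs0, -, hLs, hbd⟩ := hC (fun j => ρ j.1 j.2) (fun j => hρ j.1 j.2)
  set r : (Σ k, Fin (m k)) → ℝ := fun j => ρ j.1 j.2 with hr
  have hgr : ∀ k, b k + g k r = x := fun k => by rw [hg]; exact hx' k
  have hM0 : 0 ≤ M := (norm_nonneg _).trans (hM k₀ _ (hb k₀))
  have hLr : ‖LinearMap.pi (fun k => g k - g k₀) r‖ ≤ M + M := by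
    refine (pi_norm_le_iff_of_nonneg (by linarith)).2 fun k => ?_
    have : LinearMap.pi (fun k => g k - g k₀) r k = b k₀ - b k := by
      simp only [LinearMap.pi_apply, LinearMap.sub_apply]
      rw [← eq_sub_iff_add_eq'.2 (hgr k) |>.symm, ← eq_sub_iff_add_eq'.2 (hgr k₀) |>.symm]
      abel
    rw [this]
    exact (norm_sub_le _ _).trans (add_le_add (hM _ _ (hb _)) (hM _ _ (hb _)))
  have hgs : ∀ k, g k₀ s = g k s := fun k => (sub_eq_zero.1 (congrFun hLs k)).symm
  refine ⟨b k₀ + G (r - s), ?_, g k₀ s, ?_, ?_⟩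
  · rw [mem_closedBall_zero_iff]
    refine (norm_add_le _ _).trans (add_le_add (hM _ _ (hb _)) ((G.le_opNorm _).trans ?_))
    exact mul_le_mul_of_nonneg_left
      (hbd.trans (mul_le_mul_of_nonneg_left hLr hC0)) (norm_nonneg _)
  · refine Set.mem_iInter.2 fun k => ?_
    rw [hω k, hgs k, hg]
    exact ⟨fun i => s ⟨k, i⟩, fun i => hs0 _, rfl⟩
  · change b k₀ + g k₀ (r - s) + g k₀ s = x
    rw [map_sub, add_assoc, sub_add_cancel, hgr]
end

section
/- Let V be a finite-dimensional real inner product space of dimension d, let S ⊆ V be a closed convex subset, and let u ∈ 𝒮(V) with supp(u) ⊆ S. Define the Fourier-Laplace transform 𝓕u(λ) = ∫_V e^{−λ(x)} u(x) dx for complex functionals λ = ν + iζ with ν ∈ −C_S. Then for every N ∈ ℕ and every such λ, |𝓕u(λ)| ≤ 2^N ‖(1+Δ)^N u‖_{L¹(V)} (1+‖λ‖)^{−N} e^{H_S(−Re λ)}, where Δ is the (positive) Laplacian on V and H_S is the support function of S. -/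
/-!
Let `λ = ν + iζ`. For complex `λ` the operator `1 + Δ` corresponds to multiplication by
`1 - ‖ν‖² + ‖ζ‖² - 2i⟪ν, ζ⟫`, which can vanish, so the estimate cannot be obtained by integrating by
parts at `λ` itself. It comes from the imaginary axis and from the half-space containing `supp u`.

Identify functionals with vectors and write `ζ = sν + q` with `q ⟂ ν`. Then `λ` lies on the complex
line `z ↦ zν + iq`, at `z = 1 + is`. Since `ν + H ≥ 0` on `supp u`, where `H` is the support function
of `S` at `-ν`, the function `F(z) = ∫ e^{-z(ν(x) + H) - iq(x)} u(x) dx` is holomorphic on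
`Re z > 0`, continuous up to the boundary, and bounded by `‖u‖₁`
(`diffContOnCl_lineTransform`, `norm_lineTransform_le`).

On the axis `z = it` the functional is imaginary, and the usual Fourier identity gives
`(1 + ‖q‖² + t²‖ν‖²)^N |F(it)| ≤ ‖(1 + Δ)^N u‖₁`. The factor on the left is the modulus of
`(a + ‖ν‖z)^{2N}` at `z = it`, where `a = √(1 + ‖q‖²)`. The Phragmén–Lindelöf principle extends
`|(a + ‖ν‖z)^{2N} F(z)| ≤ ‖(1 + Δ)^N u‖₁` to the right half-plane (`norm_lineTransform_mul_le`).
At `z = 1 + is` one has `|F(z)| = e^{-H} |𝓕u(λ)|` and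
`|a + ‖ν‖z|² = (a + ‖ν‖)² + s²‖ν‖² ≥ 1 + ‖ν‖² + ‖ζ‖²`, and the bound
`(1 + X)^N ≤ 2^N (1 + X²)^N` with `X = ‖λ‖` finishes the proof.
-/


open MeasureTheory

/-- The (positive) Laplacian `Δu = -∑ ∂ᵢ² u`, computed via the second iterated
derivative along an orthonormal basis. -/
noncomputable def posLaplacian {V : Type*} [NormedAddCommGroup V] [InnerProductSpace ℝ V]
    [FiniteDimensional ℝ V] (u : V → ℂ) : V → ℂ := fun x =>
  -∑ i : Fin (Module.finrank ℝ V),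
    iteratedFDeriv ℝ 2 u x ![stdOrthonormalBasis ℝ V i, stdOrthonormalBasis ℝ V i]

/-- The operator `(1 + Δ)^N`. -/
noncomputable def onePlusLapPow {V : Type*} [NormedAddCommGroup V] [InnerProductSpace ℝ V]
    [FiniteDimensional ℝ V] (N : ℕ) (u : V → ℂ) : V → ℂ :=
  (fun f => f + posLaplacian f)^[N] u

open scoped Laplacian LineDeriv FourierTransform
open Filter Topology

section Aux

variable {V : Type*} [NormedAddCommGroup V] [InnerProductSpace ℝ V] [FiniteDimensional ℝ V]

/-! ### The multiplier of `(1 + Δ)^N` on imaginary functionals -/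

lemma posLaplacian_eq (f : SchwartzMap V ℂ) :
    posLaplacian (⇑f) = -⇑(Δ f : SchwartzMap V ℂ) := by
  funext x
  simp only [posLaplacian, Pi.neg_apply, SchwartzMap.laplacian_apply,
    InnerProductSpace.laplacian_eq_iteratedFDeriv_stdOrthonormalBasis]

/-- `(1 + Δ)^N` preserves the Schwartz space. -/
lemma onePlusLapPow_eq (N : ℕ) (f : SchwartzMap V ℂ) :
    onePlusLapPow N (⇑f) = ⇑((fun g : SchwartzMap V ℂ => g - Δ g)^[N] f) := by
  induction N generalizing f with
  | zero => rfl
  | succ N ih =>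
    have h : (⇑f + posLaplacian ⇑f : V → ℂ) = ⇑(f - Δ f) := by
      rw [posLaplacian_eq]
      funext x
      simp [sub_eq_add_neg]
    have h2 := ih (f - Δ f)
    rw [onePlusLapPow] at h2 ⊢
    rw [Function.iterate_succ_apply, Function.iterate_succ_apply, h, h2]

variable [MeasurableSpace V] [BorelSpace V]

lemma fourier_sub_laplacian (f : SchwartzMap V ℂ) (ξ : V) :
    𝓕 (f - Δ f) ξ = (1 + (2 * Real.pi * ‖ξ‖ : ℝ) ^ 2 : ℝ) * 𝓕 f ξ := by
  have hg (m : V) : (fun x : V => inner ℝ x m).HasTemperateGrowth :=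
    ((innerSL ℝ).flip m).hasTemperateGrowth
  rw [sub_eq_add_neg, FourierTransform.fourier_add, FourierTransform.fourier_neg, SchwartzMap.laplacian_eq_sum (stdOrthonormalBasis ℝ V),
    FourierTransform.fourier_sum]
  simp only [SchwartzMap.fourier_lineDerivOp_eq, add_apply, neg_apply, sum_apply,
    smul_apply, SchwartzMap.smulLeftCLM_apply_apply (hg _)]
  have hs := (stdOrthonormalBasis ℝ V).sum_sq_inner_left ξ
  simp only [smul_eq_mul, Complex.real_smul]
  push_cast
  have hs' : (∑ i, ((inner ℝ ξ (stdOrthonormalBasis ℝ V i) : ℝ) : ℂ) ^ 2) = (‖ξ‖ : ℂ) ^ 2 := by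
    exact_mod_cast hs
  rw [mul_pow, ← hs', Finset.mul_sum, add_mul, one_mul, Finset.sum_mul, ← Finset.sum_neg_distrib]
  congr 1
  refine Finset.sum_congr rfl fun i _ => ?_
  linear_combination -(4 * (Real.pi : ℂ) ^ 2 *
    ((inner ℝ ξ (stdOrthonormalBasis ℝ V i) : ℝ) : ℂ) ^ 2 * 𝓕 f ξ) * Complex.I_sq

/-- On purely imaginary functionals, `(1 + Δ)^N` acts as multiplication by `(1 + ‖w‖²)^N`. -/
lemma fourier_onePlusLapPow (N : ℕ) (f : SchwartzMap V ℂ) (w : V) :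
    ∫ x : V, Complex.exp (-((inner ℝ x w : ℝ) * Complex.I)) * onePlusLapPow N (⇑f) x =
      (1 + ‖w‖ ^ 2 : ℝ) ^ N * ∫ x : V, Complex.exp (-((inner ℝ x w : ℝ) * Complex.I)) * f x := by
  -- Mathlib normalises the Fourier transform with the phase `e^{-2πi⟪x, ξ⟫}`.
  have key (g : SchwartzMap V ℂ) :
      ∫ x : V, Complex.exp (-((inner ℝ x w : ℝ) * Complex.I)) * g x =
        𝓕 g ((2 * Real.pi)⁻¹ • w) := by
    rw [SchwartzMap.fourier_coe, Real.fourier_eq']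
    congr 1
    funext x
    rw [real_inner_smul_right, smul_eq_mul]
    congr 3
    push_cast
    field_simp
  rw [onePlusLapPow_eq, key, key]
  induction N generalizing f with
  | zero => simp
  | succ N ih =>
    rw [Function.iterate_succ_apply, ih, fourier_sub_laplacian]
    have : 2 * Real.pi * ‖(2 * Real.pi)⁻¹ • w‖ = ‖w‖ := by
      rw [norm_smul, Real.norm_of_nonneg (by positivity)]
      field_simp
    rw [this]
    ring

lemma norm_fourier_le (N : ℕ) (f : SchwartzMap V ℂ) (w : V) :
    (1 + ‖w‖ ^ 2) ^ N * ‖∫ x : V, Complex.exp (-((inner ℝ x w : ℝ) * Complex.I)) * f x‖ ≤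
      ∫ x : V, ‖onePlusLapPow N (⇑f) x‖ := by
  have h := fourier_onePlusLapPow N f w
  have h2 := congrArg norm h
  rw [norm_mul, norm_pow, Complex.norm_real, Real.norm_of_nonneg (by positivity)] at h2
  rw [← h2]
  refine (norm_integral_le_integral_norm _).trans_eq ?_
  congr 1
  funext x
  rw [norm_mul, ← neg_mul, ← Complex.ofReal_neg, Complex.norm_exp_ofReal_mul_I, one_mul]


/-! ### The transform along a complex line -/

/-- The integrand of the Fourier–Laplace transform of `f` along the complex line
`z ↦ z ⟪·, p⟫ + i ⟪·, q⟫`, with `⟪·, p⟫` shifted by the constant `H`. -/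
noncomputable def lineKernel (f : V → ℂ) (p q : V) (H : ℝ) (z : ℂ) (x : V) : ℂ :=
  Complex.exp (-(z * ((inner ℝ x p + H : ℝ) : ℂ) + (inner ℝ x q : ℝ) * Complex.I)) * f x

/-- The Fourier–Laplace transform of `f` along a complex line, up to the factor `e^{-zH}`. -/
noncomputable def lineTransform (f : V → ℂ) (p q : V) (H : ℝ) (z : ℂ) : ℂ :=
  ∫ x : V, lineKernel f p q H z x

section Line

variable {f : SchwartzMap V ℂ} {p q : V} {H : ℝ}

omit [FiniteDimensional ℝ V] [MeasurableSpace V] [BorelSpace V] in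
lemma continuous_lineKernel (z : ℂ) : Continuous (lineKernel (⇑f) p q H z) := by
  unfold lineKernel
  have := f.continuous
  fun_prop

omit [FiniteDimensional ℝ V] [MeasurableSpace V] [BorelSpace V] in
lemma norm_lineKernel_le (hH : ∀ x, f x ≠ 0 → 0 ≤ inner ℝ x p + H) {z : ℂ} (hz : 0 ≤ z.re)
    (x : V) : ‖lineKernel (⇑f) p q H z x‖ ≤ ‖f x‖ := by
  by_cases hx : f x = 0
  · simp [lineKernel, hx]
  · have h := mul_nonneg hz (hH x hx)
    rw [lineKernel, norm_mul, Complex.norm_exp]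
    refine mul_le_of_le_one_left (norm_nonneg _) (Real.exp_le_one_iff.2 ?_)
    simp only [Complex.neg_re, Complex.add_re, Complex.re_mul_ofReal, Complex.re_ofReal_mul,
      Complex.I_re, mul_zero, add_zero]
    linarith

lemma norm_lineTransform_le (hH : ∀ x, f x ≠ 0 → 0 ≤ inner ℝ x p + H) {z : ℂ}
    (hz : 0 ≤ z.re) : ‖lineTransform (⇑f) p q H z‖ ≤ ∫ x : V, ‖f x‖ :=
  norm_integral_le_of_norm_le f.integrable.norm
    (Eventually.of_forall (norm_lineKernel_le hH hz))

lemma diffContOnCl_lineTransform (hH : ∀ x, f x ≠ 0 → 0 ≤ inner ℝ x p + H) :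
    DiffContOnCl ℂ (lineTransform (⇑f) p q H) {z | 0 < z.re} := by
  constructor
  · intro z₀ hz₀
    have hopen : {z : ℂ | 0 < z.re} ∈ 𝓝 z₀ :=
      (isOpen_lt continuous_const Complex.continuous_re).mem_nhds hz₀
    refine DifferentiableAt.differentiableWithinAt (HasDerivAt.differentiableAt
      (hasDerivAt_integral_of_dominated_loc_of_deriv_le (𝕜 := ℂ) (F := lineKernel (⇑f) p q H)
      (F' := fun z x => -((inner ℝ x p + H : ℝ) : ℂ) * lineKernel (⇑f) p q H z x)
      (bound := fun x => ‖p‖ * (‖x‖ ^ 1 * ‖f x‖) + |H| * ‖f x‖) hopen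
      (Eventually.of_forall fun z => (continuous_lineKernel z).aestronglyMeasurable)
      (f.integrable.mono (continuous_lineKernel z₀).aestronglyMeasurable
        (Eventually.of_forall (norm_lineKernel_le hH (le_of_lt hz₀)))) ?_ ?_ ?_ ?_).2)
    · have := continuous_lineKernel (f := f) (p := p) (q := q) (H := H) z₀
      exact Continuous.aestronglyMeasurable (by fun_prop)
    · refine Eventually.of_forall fun x z hz => ?_
      rw [norm_mul, norm_neg, Complex.norm_real]
      have h1 : ‖(inner ℝ x p + H : ℝ)‖ ≤ ‖x‖ * ‖p‖ + |H| :=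
        (norm_add_le _ _).trans (add_le_add (norm_inner_le_norm x p) le_rfl)
      calc _ ≤ (‖x‖ * ‖p‖ + |H|) * ‖f x‖ :=
            mul_le_mul h1 (norm_lineKernel_le hH (le_of_lt hz) x) (norm_nonneg _) (by positivity)
        _ = _ := by ring
    · exact ((f.integrable_pow_mul volume 1).const_mul _).add (f.integrable.norm.const_mul _)
    · refine Eventually.of_forall fun x z _ => ?_
      have h1 : HasDerivAt (fun z : ℂ =>
          -(z * ((inner ℝ x p + H : ℝ) : ℂ) + (inner ℝ x q : ℝ) * Complex.I))
          (-(1 * ((inner ℝ x p + H : ℝ) : ℂ))) z :=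
        (((hasDerivAt_id z).mul_const _).add_const _).neg
      refine (h1.cexp.mul_const (f x)).congr_deriv ?_
      rw [lineKernel]
      ring
  · rw [Complex.closure_setOfPred_lt_re]
    refine continuousOn_of_dominated (bound := fun x => ‖f x‖)
      (fun z _ => (continuous_lineKernel z).aestronglyMeasurable)
      (fun z hz => Eventually.of_forall (norm_lineKernel_le hH hz)) f.integrable.norm
      (Eventually.of_forall fun x => ?_)
    unfold lineKernel
    fun_prop

lemma norm_lineTransform_imag_le (hpq : inner ℝ p q = 0) (N : ℕ) (t : ℝ) :
    ‖((Real.sqrt (1 + ‖q‖ ^ 2) : ℂ) + ‖p‖ * (t * Complex.I)) ^ (2 * N) *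
      lineTransform (⇑f) p q H (t * Complex.I)‖ ≤ ∫ x : V, ‖onePlusLapPow N (⇑f) x‖ := by
  have h1 : ‖(Real.sqrt (1 + ‖q‖ ^ 2) : ℂ) + ‖p‖ * (t * Complex.I)‖ ^ 2 =
      1 + ‖t • p + q‖ ^ 2 := by
    rw [norm_add_sq_real (t • p), real_inner_smul_left, hpq, norm_smul, Complex.sq_norm,
      ← mul_assoc, ← Complex.ofReal_mul, Complex.normSq_add_mul_I, Real.sq_sqrt (by positivity),
      mul_pow, mul_pow, Real.norm_eq_abs, sq_abs]
    ring
  have h2 : lineTransform (⇑f) p q H (t * Complex.I) =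
      Complex.exp ((-(t * H) : ℝ) * Complex.I) *
      ∫ x : V, Complex.exp (-((inner ℝ x (t • p + q) : ℝ) * Complex.I)) * f x := by
    rw [lineTransform, ← integral_const_mul]
    congr 1
    funext x
    rw [lineKernel, ← mul_assoc, ← Complex.exp_add, inner_add_right, real_inner_smul_right]
    congr 2
    push_cast
    ring
  rw [norm_mul, norm_pow, pow_mul, h1, h2, norm_mul, Complex.norm_exp_ofReal_mul_I, one_mul]
  exact norm_fourier_le N f _

/-- The multiplier of `(1 + Δ)^N` on the imaginary axis agrees in modulus with the function
`(√(1 + ‖q‖²) + ‖p‖ z)^(2N)`, which has no zeros in the right half-plane; the Phragmén–Lindelöf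
principle therefore carries the bound on the axis over to the half-plane. -/
lemma norm_lineTransform_mul_le (hH : ∀ x, f x ≠ 0 → 0 ≤ inner ℝ x p + H)
    (hpq : inner ℝ p q = 0) (N : ℕ) {z : ℂ} (hz : 0 ≤ z.re) :
    ‖((Real.sqrt (1 + ‖q‖ ^ 2) : ℂ) + ‖p‖ * z) ^ (2 * N) * lineTransform (⇑f) p q H z‖ ≤
      ∫ x : V, ‖onePlusLapPow N (⇑f) x‖ := by
  set A : ℝ := Real.sqrt (1 + ‖q‖ ^ 2) with hA
  have hA0 : 0 ≤ A := Real.sqrt_nonneg _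
  set D : ℝ := ∫ x : V, ‖f x‖ with hD
  have hD0 : 0 ≤ D := integral_nonneg fun _ => norm_nonneg _
  set G : ℂ → ℂ := fun z => ((A : ℂ) + ‖p‖ * z) ^ (2 * N) * lineTransform (⇑f) p q H z with hG
  have hGle {z : ℂ} (hz : 0 ≤ z.re) : ‖G z‖ ≤ (A + ‖p‖ * ‖z‖) ^ (2 * N) * D := by
    rw [hG, norm_mul, norm_pow]
    have : ‖(A : ℂ) + ‖p‖ * z‖ ≤ A + ‖p‖ * ‖z‖ := by
      refine (norm_add_le _ _).trans_eq ?_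
      rw [norm_mul, Complex.norm_real, Complex.norm_real, norm_norm, Real.norm_of_nonneg hA0]
    gcongr
    exact norm_lineTransform_le hH hz
  have hGd : DiffContOnCl ℂ G {z | 0 < z.re} := by
    have hd : Differentiable ℂ fun z : ℂ => ((A : ℂ) + ‖p‖ * z) ^ (2 * N) := by fun_prop
    exact hd.diffContOnCl.smul (diffContOnCl_lineTransform hH)
  have hexp1 {ε : ℝ} (hε : 0 < ε) {z : ℂ} (hz : 0 ≤ z.re) : ‖Complex.exp (-(ε * z))‖ ≤ 1 := by
    rw [Complex.norm_exp, Complex.neg_re, Complex.re_ofReal_mul]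
    exact Real.exp_le_one_iff.2 (by have := mul_nonneg hε.le hz; linarith)
  -- The factor `e^{-εz}` provides the decay along the positive reals; it is unimodular on the axis.
  have main (ε : ℝ) (hε : 0 < ε) :
      ‖Complex.exp (-(ε * z)) * G z‖ ≤ ∫ x : V, ‖onePlusLapPow N (⇑f) x‖ := by
    refine PhragmenLindelof.right_half_plane_of_tendsto_zero_on_real
      (f := fun z => Complex.exp (-(ε * z)) * G z) ?_ ⟨1, by norm_num, 2 * N * ‖p‖, ?_⟩ ?_ ?_ hz
    · have hd : Differentiable ℂ fun z : ℂ => Complex.exp (-(ε * z)) := by fun_prop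
      exact hd.diffContOnCl.smul hGd
    · refine Asymptotics.IsBigO.of_bound (Real.exp (2 * N * A) * D) ?_
      refine eventually_inf_principal.2 (Eventually.of_forall fun z hz => ?_)
      have hz' : 0 ≤ z.re := le_of_lt hz
      rw [norm_mul, Real.norm_of_nonneg (Real.exp_pos _).le, Real.rpow_one]
      calc ‖Complex.exp (-(ε * z))‖ * ‖G z‖ ≤ 1 * ((A + ‖p‖ * ‖z‖) ^ (2 * N) * D) := by
            gcongr
            · exact hexp1 hε hz'
            · exact hGle hz'
        _ ≤ 1 * (Real.exp (A + ‖p‖ * ‖z‖) ^ (2 * N) * D) := by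
            gcongr
            linarith [Real.add_one_le_exp (A + ‖p‖ * ‖z‖)]
        _ = _ := by
            rw [← Real.exp_nat_mul, one_mul, mul_right_comm, ← Real.exp_add]
            congr 2
            push_cast
            ring
    · rw [tendsto_zero_iff_norm_tendsto_zero]
      have h1 := ((Polynomial.tendsto_div_exp_atTop
        ((Polynomial.C A + Polynomial.C (‖p‖ / ε) * Polynomial.X) ^ (2 * N))).comp
        (tendsto_id.const_mul_atTop hε)).mul_const D
      rw [zero_mul] at h1
      refine squeeze_zero' (Eventually.of_forall fun _ => norm_nonneg _) ?_ h1
      filter_upwards [eventually_ge_atTop 0] with x hx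
      have h2 := hGle (z := (x : ℂ)) (by simpa using hx)
      rw [Complex.norm_real, Real.norm_of_nonneg hx] at h2
      have h3 : ‖Complex.exp (-(ε * x))‖ = (Real.exp (ε * x))⁻¹ := by
        rw [Complex.norm_exp, ← Real.exp_neg]
        simp
      rw [norm_mul, h3]
      refine (mul_le_mul_of_nonneg_left h2 (by positivity)).trans_eq ?_
      have h4 : A + ‖p‖ / ε * (ε * x) = A + ‖p‖ * x := by field_simp
      simp only [Function.comp_apply, Polynomial.eval_pow, Polynomial.eval_add,
        Polynomial.eval_mul, Polynomial.eval_C, Polynomial.eval_X, id, h4]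
      ring
    · intro t
      have h1 : -((ε : ℂ) * (t * Complex.I)) = (-(ε * t) : ℝ) * Complex.I := by
        push_cast
        ring
      rw [norm_mul, h1, Complex.norm_exp_ofReal_mul_I, one_mul]
      exact norm_lineTransform_imag_le hpq N t
  have hlim : Tendsto (fun ε : ℝ => ‖Complex.exp (-(ε * z)) * G z‖) (𝓝[>] 0) (𝓝 ‖G z‖) := by
    refine Tendsto.mono_left ?_ nhdsWithin_le_nhds
    exact Continuous.tendsto' (by fun_prop) _ _ (by simp)
  exact le_of_tendsto hlim (eventually_mem_nhdsWithin.mono fun ε hε => main ε hε)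

end Line

omit [FiniteDimensional ℝ V] [MeasurableSpace V] [BorelSpace V] in
lemma exists_inner_sub_smul_eq_zero (p w : V) : ∃ s : ℝ, inner ℝ p (w - s • p) = 0 := by
  by_cases hp : p = 0
  · exact ⟨0, by simp [hp]⟩
  · refine ⟨inner ℝ p w / inner ℝ p p, ?_⟩
    have : inner ℝ p p ≠ 0 := inner_self_ne_zero.2 hp
    rw [inner_sub_right, real_inner_smul_right]
    field_simp
    ring

end Aux

/-! ### The estimate at `λ = ν + iζ` -/

theorem stmt8 (V : Type*) [NormedAddCommGroup V] [InnerProductSpace ℝ V]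
    [FiniteDimensional ℝ V] [MeasurableSpace V] [BorelSpace V]
    (S : Set V) (hScl : IsClosed S) (hScv : Convex ℝ S)
    (u : SchwartzMap V ℂ) (hsupp : Function.support u ⊆ S)
    (N : ℕ) (ν ζ : V →L[ℝ] ℝ) (hν : BddAbove ((fun x => -ν x) '' S)) :
    ‖∫ x : V, Complex.exp (-((ν x : ℂ) + (ζ x : ℂ) * Complex.I)) * u x‖ ≤
      2 ^ N * (∫ x : V, ‖onePlusLapPow N (⇑u) x‖) *
        ((1 + Real.sqrt (‖ν‖ ^ 2 + ‖ζ‖ ^ 2)) ^ N)⁻¹ *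
        Real.exp (sSup ((fun x => -ν x) '' S)) := by
  set H : ℝ := sSup ((fun x => -ν x) '' S) with hHdef
  obtain ⟨p, rfl⟩ := (InnerProductSpace.toDual ℝ V).surjective ν
  obtain ⟨w, rfl⟩ := (InnerProductSpace.toDual ℝ V).surjective ζ
  simp only [InnerProductSpace.toDual_apply_apply, LinearIsometryEquiv.norm_map] at *
  obtain ⟨s, hs⟩ := exists_inner_sub_smul_eq_zero p w
  set q : V := w - s • p with hq
  have hH : ∀ x, u x ≠ 0 → 0 ≤ inner ℝ x p + H := fun x hx => by
    have := le_csSup hν (Set.mem_image_of_mem _ (hsupp hx))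
    rw [real_inner_comm]
    linarith
  -- On the line `z ↦ zν + i⟪·, q⟫`, the functional `ν + iζ` is the point `z = 1 + is`.
  have key := norm_lineTransform_mul_le (q := q) hH hs N (z := 1 + s * Complex.I) (by simp)
  have h1 : lineTransform (⇑u) p q H (1 + s * Complex.I) =
      Complex.exp (-(H : ℂ) + (-(s * H) : ℝ) * Complex.I) *
      ∫ x : V, Complex.exp (-(((inner ℝ p x : ℝ) : ℂ) +
        ((inner ℝ w x : ℝ) : ℂ) * Complex.I)) * u x := by
    rw [lineTransform, ← integral_const_mul]
    congr 1
    funext x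
    rw [lineKernel, ← mul_assoc, ← Complex.exp_add, hq, inner_sub_right, real_inner_smul_right,
      real_inner_comm p x, real_inner_comm w x]
    congr 2
    push_cast
    ring
  have h2 : ‖Complex.exp (-(H : ℂ) + (-(s * H) : ℝ) * Complex.I)‖ = (Real.exp H)⁻¹ := by
    rw [Complex.norm_exp, ← Real.exp_neg]
    simp
  have hw : ‖w‖ ^ 2 = s ^ 2 * ‖p‖ ^ 2 + ‖q‖ ^ 2 := by
    have : w = s • p + q := by rw [hq]; abel
    rw [this, norm_add_sq_real, real_inner_smul_left, hs, norm_smul, mul_pow, Real.norm_eq_abs,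
      sq_abs]
    ring
  have h3 : 1 + (‖p‖ ^ 2 + ‖w‖ ^ 2) ≤
      ‖(Real.sqrt (1 + ‖q‖ ^ 2) : ℂ) + ‖p‖ * (1 + s * Complex.I)‖ ^ 2 := by
    have e : (Real.sqrt (1 + ‖q‖ ^ 2) : ℂ) + ‖p‖ * (1 + s * Complex.I) =
        ((Real.sqrt (1 + ‖q‖ ^ 2) + ‖p‖ : ℝ) : ℂ) + ((‖p‖ * s : ℝ) : ℂ) * Complex.I := by
      push_cast
      ring
    have hsq : Real.sqrt (1 + ‖q‖ ^ 2) ^ 2 = 1 + ‖q‖ ^ 2 := Real.sq_sqrt (by positivity)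
    have hpos : 0 ≤ Real.sqrt (1 + ‖q‖ ^ 2) * ‖p‖ := by positivity
    rw [e, Complex.sq_norm, Complex.normSq_add_mul_I, hw]
    linarith
  set J := ‖∫ x : V, Complex.exp (-(((inner ℝ p x : ℝ) : ℂ) +
        ((inner ℝ w x : ℝ) : ℂ) * Complex.I)) * u x‖ with hJ
  set M := ∫ x : V, ‖onePlusLapPow N (⇑u) x‖ with hM
  rw [norm_mul, norm_pow, h1, norm_mul, h2, pow_mul] at key
  have hX2 : Real.sqrt (‖p‖ ^ 2 + ‖w‖ ^ 2) ^ 2 = ‖p‖ ^ 2 + ‖w‖ ^ 2 := Real.sq_sqrt (by positivity)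
  set X := Real.sqrt (‖p‖ ^ 2 + ‖w‖ ^ 2) with hX
  have hX0 : 0 ≤ X := Real.sqrt_nonneg _
  have h4 : (1 + X) ^ N ≤ 2 ^ N * (1 + (‖p‖ ^ 2 + ‖w‖ ^ 2)) ^ N := by
    rw [← mul_pow, ← hX2]
    gcongr
    nlinarith [sq_nonneg (X - 1)]
  have h5 : (1 + X) ^ N * ((Real.exp H)⁻¹ * J) ≤ 2 ^ N * M := by
    calc _ ≤ 2 ^ N * (1 + (‖p‖ ^ 2 + ‖w‖ ^ 2)) ^ N * ((Real.exp H)⁻¹ * J) := by gcongr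
      _ = 2 ^ N * ((1 + (‖p‖ ^ 2 + ‖w‖ ^ 2)) ^ N * ((Real.exp H)⁻¹ * J)) := by ring
      _ ≤ _ := by
        gcongr
        refine le_trans ?_ key
        gcongr
  calc J = ((1 + X) ^ N * ((Real.exp H)⁻¹ * J)) * ((1 + X) ^ N)⁻¹ * Real.exp H := by
        field_simp
    _ ≤ _ := by gcongr
end

section
/- Let V be a finite-dimensional real inner product space, B ⊆ V compact, Γ ⊆ V a closed cone containing 0, and ν₀ ∈ V* with ν₀(x) < ∞-bounded above on Γ (i.e. ν₀ ∈ −C_Γ). Then for every N ∈ ℕ there is a constant C = 2^N(1+‖ν₀‖)^N e^{H_B(ν₀)} such that: for every smooth u : V → ℂ with supp(u) ⊆ B+Γ and e^{−ν₀}u ∈ 𝒮(V), and every λ ∈ ν₀ − C_Γ + iV*, the Fourier–Laplace transform 𝓕u(λ) = ∫_V e^{−λ(x)}u(x)dx satisfies |𝓕u(λ)| ≤ C ‖(1+Δ)^N (e^{−ν₀}u)‖_{L¹} (1+‖λ‖)^{−N} e^{H_B(−Re λ)}. -/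
/-! The transform of `u` at `ν + i ζ` is the transform of the Schwartz function `g = e^{-ν₀} u` at
`μ = η + i ζ`, where `η = ν - ν₀` is nonnegative on `Γ`. Integration by parts with `(1 + Δ)^N`
would produce the factor `(1 - μ·μ)^N` (bilinear square), which may vanish, so it does not give
decay in `|μ| = √(‖η‖² + ‖ζ‖²)`. Instead one uses a first order operator `D = 1 + ∂_e` with
complex direction `e = a + i b`, `‖a‖² + ‖b‖² ≤ 1`, chosen so that `μ(e) = |μ|`
(`exists_direction`). Derivatives do not enlarge supports and `e^{-μ}` is bounded on `B + Γ`, hence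
`∫ e^{-μ} D^N g = (1 + |μ|)^N ∫ e^{-μ} g` (`integral_cexp_mul_iterate_onePlusDeriv`).

It remains to show `‖D^N g‖₁ ≤ 2^N ‖(1 + Δ)^N g‖₁`. Since `D` commutes with `1 + Δ`, this follows
by iteration from the case `N = 1` (`integral_norm_onePlusDeriv_le`). There, writing
`(1 + Δ)⁻¹ = ∫₀^∞ e^{-t} e^{-tΔ} dt` gives (`onePlusDeriv_eq_integral`)
`D g = ∫₀^∞ e^{-t} κ_t * (1 + Δ) g dt`, where `κ_t = K_t + ∂_e K_t` and `K_t` is the heat kernel.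
By the second moments of the Gaussian, `‖κ_t‖₁ ≤ √(1 + 1/2t) ≤ (1 + t)/√(2t)`
(`integral_norm_heatDerivKernel_le`), and `∫₀^∞ e^{-t} (1 + t)/√(2t) dt = (3/2)√(π/2) ≤ 2`.

The theorem follows from `-η(y + z) ≤ ν₀(y) - ν(y)` for `y ∈ B`, `z ∈ Γ`, and from
`1 + √(‖ν‖² + ‖ζ‖²) ≤ (1 + ‖ν₀‖)(1 + |μ|)`. -/

open MeasureTheory
open scoped Pointwise

namespace FourierLaplaceEstimate

open SchwartzMap LineDeriv Laplacian FourierTransform Complex Set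
open scoped RealInnerProductSpace ENNReal

variable {V : Type*} [NormedAddCommGroup V] [InnerProductSpace ℝ V] [FiniteDimensional ℝ V]

/-! ### The operators `1 + ∂_e` and `1 + Δ` on Schwartz functions -/

/-- The first order operator `f ↦ f + ∂_e f`, where `e = a + i b` is a vector of the
complexification of `V`. -/
noncomputable def onePlusDeriv (a b : V) (f : SchwartzMap V ℂ) : SchwartzMap V ℂ :=
  f + ∂_{a} f + I • ∂_{b} f

/-- The operator `1 + Δ` with the positive Laplacian, acting on Schwartz functions. Mathlib's `Δ`
has the opposite sign. -/
noncomputable def onePlusLap (f : SchwartzMap V ℂ) : SchwartzMap V ℂ := f - Δ f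

lemma coe_onePlusLap (f : SchwartzMap V ℂ) : ⇑(onePlusLap f) = ⇑f + posLaplacian ⇑f := by
  ext x
  have h : Δ f x = (Δ (f : V → ℂ)) x := SchwartzMap.laplacian_apply f x
  rw [InnerProductSpace.laplacian_eq_iteratedFDeriv_stdOrthonormalBasis] at h
  simp only [onePlusLap, posLaplacian, sub_apply, Pi.add_apply, h]
  ring

lemma onePlusLapPow_coe (N : ℕ) (f : SchwartzMap V ℂ) :
    onePlusLapPow N ⇑f = ⇑(onePlusLap^[N] f) := by
  induction N generalizing f with
  | zero => rfl
  | succ N ih =>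
    rw [Function.iterate_succ_apply, ← ih]
    simp only [onePlusLapPow, Function.iterate_succ_apply, coe_onePlusLap]

omit [FiniteDimensional ℝ V] in
lemma onePlusDeriv_apply (a b : V) (f : SchwartzMap V ℂ) (x : V) :
    onePlusDeriv a b f x = f x + fderiv ℝ f x a + I * fderiv ℝ f x b := by
  simp [onePlusDeriv, SchwartzMap.lineDerivOp_apply_eq_fderiv]

omit [FiniteDimensional ℝ V] in
lemma tsupport_onePlusDeriv_subset (a b : V) (f : SchwartzMap V ℂ) :
    tsupport (onePlusDeriv a b f) ⊆ tsupport f := by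
  refine closure_minimal (fun x hx => ?_) (isClosed_tsupport _)
  by_contra hf
  have h : ∀ v, fderiv ℝ f x v = 0 := fun v => by
    have := image_eq_zero_of_notMem_tsupport
      (fun h => hf (SchwartzMap.tsupport_lineDerivOp_subset v f h))
    rwa [SchwartzMap.lineDerivOp_apply_eq_fderiv] at this
  exact hx (by simp [onePlusDeriv_apply, h, image_eq_zero_of_notMem_tsupport hf])

variable [MeasurableSpace V] [BorelSpace V]

lemma fourier_lineDeriv_apply (f : SchwartzMap V ℂ) (m ξ : V) :
    𝓕 (∂_{m} f) ξ = 2 * Real.pi * I * ⟪ξ, m⟫ * 𝓕 f ξ := by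
  have : (inner ℝ · m).HasTemperateGrowth := ((innerSL ℝ).flip m).hasTemperateGrowth
  simp [SchwartzMap.fourier_lineDerivOp_eq, this, mul_assoc]

lemma fourier_onePlusDeriv (a b : V) (f : SchwartzMap V ℂ) (ξ : V) :
    𝓕 (onePlusDeriv a b f) ξ =
      (1 + 2 * Real.pi * I * ⟪ξ, a⟫ + I * (2 * Real.pi * I * ⟪ξ, b⟫)) * 𝓕 f ξ := by
  simp only [onePlusDeriv, FourierTransform.fourier_add, FourierTransform.fourier_smul,
    add_apply, smul_apply, fourier_lineDeriv_apply, smul_eq_mul]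
  ring

lemma fourier_onePlusLap (f : SchwartzMap V ℂ) (ξ : V) :
    𝓕 (onePlusLap f) ξ = (1 + 4 * Real.pi ^ 2 * ‖ξ‖ ^ 2 : ℝ) * 𝓕 f ξ := by
  have h : ∀ v : V, 𝓕 (∂_{v} (∂_{v} f)) ξ = -(4 * Real.pi ^ 2 * ⟪ξ, v⟫ ^ 2 : ℝ) * 𝓕 f ξ := by
    intro v
    rw [fourier_lineDeriv_apply, fourier_lineDeriv_apply]
    push_cast
    linear_combination (4 * Real.pi ^ 2 * ⟪ξ, v⟫ ^ 2 * 𝓕 f ξ : ℂ) * I_sq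
  have hsum : 𝓕 (Δ f) ξ = -(4 * Real.pi ^ 2 * ‖ξ‖ ^ 2 : ℝ) * 𝓕 f ξ := by
    rw [SchwartzMap.laplacian_eq_sum (stdOrthonormalBasis ℝ V),
      FourierTransform.fourier_sum, sum_apply]
    simp only [h]
    rw [← (stdOrthonormalBasis ℝ V).sum_sq_inner_left ξ, Finset.mul_sum]
    push_cast
    rw [← Finset.sum_mul, Finset.sum_neg_distrib]
  rw [onePlusLap, sub_eq_add_neg, FourierTransform.fourier_add, add_apply,
    FourierTransform.fourier_neg, neg_apply, hsum]
  push_cast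
  ring

lemma onePlusDeriv_onePlusLap (a b : V) (f : SchwartzMap V ℂ) :
    onePlusDeriv a b (onePlusLap f) = onePlusLap (onePlusDeriv a b f) := by
  have h : 𝓕 (onePlusDeriv a b (onePlusLap f)) = 𝓕 (onePlusLap (onePlusDeriv a b f)) := by
    ext ξ
    simp only [fourier_onePlusDeriv, fourier_onePlusLap]
    ring
  simpa using congrArg (𝓕⁻ : SchwartzMap V ℂ → SchwartzMap V ℂ) h

lemma onePlusDeriv_iterate_onePlusLap (a b : V) (N : ℕ) (f : SchwartzMap V ℂ) :
    onePlusDeriv a b (onePlusLap^[N] f) = onePlusLap^[N] (onePlusDeriv a b f) :=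
  (Function.Commute.iterate_right (f := onePlusDeriv a b) (onePlusDeriv_onePlusLap a b) N) f

/-! ### The heat kernel and its first derivatives in `L¹` -/

/-- The heat kernel `(4πt)^{-n/2} exp(-‖z‖²/4t)` of `V`, the density of a centred Gaussian vector
with covariance `2t`. -/
noncomputable def heatKernel (t : ℝ) (z : V) : ℝ :=
  (4 * Real.pi * t) ^ (-(Module.finrank ℝ V / 2 : ℝ)) * Real.exp (-(1 / (4 * t)) * ‖z‖ ^ 2)

/-- The kernel of `(1 + ∂_e) ∘ e^{-tΔ}`, where `e = a + i b`: the heat kernel plus its derivative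
in the direction `e`. -/
noncomputable def heatDerivKernel (a b : V) (t : ℝ) (z : V) : ℂ :=
  (1 - ⟪z, a⟫ / (2 * t) - I * (⟪z, b⟫ / (2 * t))) * heatKernel t z

omit [FiniteDimensional ℝ V] [MeasurableSpace V] [BorelSpace V] in
lemma heatKernel_nonneg {t : ℝ} (ht : 0 < t) (z : V) : 0 ≤ heatKernel t z := by
  unfold heatKernel
  positivity

lemma integrable_exp_neg_mul_sq {c : ℝ} (hc : 0 < c) :
    Integrable (fun z : V => Real.exp (-c * ‖z‖ ^ 2)) := by
  have := (GaussianFourier.integrable_cexp_neg_mul_sq_norm_add (V := V) (b := (c : ℂ))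
    (by simpa using hc) 0 0).norm
  refine this.congr (Filter.Eventually.of_forall fun z => ?_)
  simp only [Complex.norm_exp]
  norm_cast
  simp

lemma integrable_heatKernel {t : ℝ} (ht : 0 < t) : Integrable (heatKernel (V := V) t) :=
  (integrable_exp_neg_mul_sq (by positivity)).const_mul _

lemma integral_heatKernel {t : ℝ} (ht : 0 < t) : ∫ z : V, heatKernel t z = 1 := by
  unfold heatKernel
  rw [integral_const_mul, GaussianFourier.integral_rexp_neg_mul_sq_norm (by positivity),
    show Real.pi / (1 / (4 * t)) = 4 * Real.pi * t by field_simp,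
    ← Real.rpow_add (by positivity), neg_add_cancel, Real.rpow_zero]

omit [FiniteDimensional ℝ V] [MeasurableSpace V] [BorelSpace V] in
lemma continuous_heatKernel (t : ℝ) : Continuous (heatKernel (V := V) t) := by
  unfold heatKernel
  fun_prop

lemma integrable_sq_mul_heatKernel {t : ℝ} (ht : 0 < t) :
    Integrable (fun z : V => ‖z‖ ^ 2 * heatKernel t z) := by
  have h := ((integrable_exp_neg_mul_sq (V := V) (c := 1 / (8 * t)) (by positivity)).const_mul
    ((4 * Real.pi * t) ^ (-(Module.finrank ℝ V / 2 : ℝ)))).const_mul (8 * t)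
  refine h.mono' ((continuous_norm.pow 2).mul (continuous_heatKernel t)).aestronglyMeasurable
    (Filter.Eventually.of_forall fun z => ?_)
  rw [Real.norm_of_nonneg (mul_nonneg (by positivity) (heatKernel_nonneg ht z))]
  unfold heatKernel
  have h1 : ‖z‖ ^ 2 ≤ 8 * t * Real.exp (1 / (8 * t) * ‖z‖ ^ 2) := by
    have h2 := Real.add_one_le_exp (1 / (8 * t) * ‖z‖ ^ 2)
    have h3 : 8 * t * (1 / (8 * t) * ‖z‖ ^ 2) = ‖z‖ ^ 2 := by field_simp
    nlinarith
  have h4 : Real.exp (-(1 / (8 * t)) * ‖z‖ ^ 2) =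
      Real.exp (1 / (8 * t) * ‖z‖ ^ 2) * Real.exp (-(1 / (4 * t)) * ‖z‖ ^ 2) := by
    rw [← Real.exp_add]
    congr 1
    field_simp
    ring
  rw [h4]
  calc _ ≤ (8 * t * Real.exp (1 / (8 * t) * ‖z‖ ^ 2)) *
      ((4 * Real.pi * t) ^ (-(Module.finrank ℝ V / 2 : ℝ)) *
        Real.exp (-(1 / (4 * t)) * ‖z‖ ^ 2)) := by gcongr
    _ = _ := by ring

lemma integrable_inner_sq_mul_heatKernel {t : ℝ} (ht : 0 < t) (v : V) :
    Integrable (fun z : V => ⟪z, v⟫ ^ 2 * heatKernel t z) := by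
  refine ((integrable_sq_mul_heatKernel ht).const_mul (‖v‖ ^ 2)).mono'
    (Continuous.aestronglyMeasurable (by have := continuous_heatKernel (V := V) t; fun_prop))
    (Filter.Eventually.of_forall fun z => ?_)
  have h := abs_real_inner_le_norm z v
  have h0 := heatKernel_nonneg ht z
  rw [norm_mul, Real.norm_of_nonneg h0, norm_pow, Real.norm_eq_abs, ← mul_assoc]
  gcongr
  calc |⟪z, v⟫| ^ 2 ≤ (‖z‖ * ‖v‖) ^ 2 := by gcongr
    _ = _ := by ring

lemma integrable_inner_mul_heatKernel {t : ℝ} (ht : 0 < t) (v : V) :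
    Integrable (fun z : V => ⟪z, v⟫ * heatKernel t z) := by
  refine ((integrable_heatKernel ht).add (integrable_inner_sq_mul_heatKernel ht v)).mono'
    (Continuous.aestronglyMeasurable (by have := continuous_heatKernel (V := V) t; fun_prop))
    (Filter.Eventually.of_forall fun z => ?_)
  have h0 := heatKernel_nonneg ht z
  rw [norm_mul, Real.norm_of_nonneg h0, Real.norm_eq_abs, Pi.add_apply]
  have : |⟪z, v⟫| ≤ 1 + ⟪z, v⟫ ^ 2 := by
    rw [← sq_abs]
    nlinarith [sq_nonneg (|⟪z, v⟫| - 1), abs_nonneg ⟪z, v⟫]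
  nlinarith

omit [FiniteDimensional ℝ V] [MeasurableSpace V] [BorelSpace V] in
lemma hasFDerivAt_heatKernel (t : ℝ) (z : V) :
    HasFDerivAt (heatKernel t) ((-(1 / (2 * t)) * heatKernel t z) • innerSL ℝ z) z := by
  have h := (((hasStrictFDerivAt_norm_sq z).hasFDerivAt.const_mul (-(1 / (4 * t)))).exp).const_mul
    ((4 * Real.pi * t) ^ (-(Module.finrank ℝ V / 2 : ℝ)))
  refine h.congr_fderiv ?_
  ext v
  simp [heatKernel]
  ring

lemma integral_inner_mul_heatKernel (t : ℝ) (v : V) : ∫ z : V, ⟪z, v⟫ * heatKernel t z = 0 := by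
  have h := integral_neg_eq_self (fun z : V => ⟪z, v⟫ * heatKernel t z) volume
  have h2 : ∀ z : V, ⟪-z, v⟫ * heatKernel t (-z) = -(⟪z, v⟫ * heatKernel t z) := fun z => by
    simp [heatKernel]
  simp only [h2, integral_neg] at h
  linarith

lemma integral_inner_sq_mul_heatKernel {t : ℝ} (ht : 0 < t) (v : V) :
    ∫ z : V, ⟪z, v⟫ ^ 2 * heatKernel t z = 2 * t * ‖v‖ ^ 2 := by
  have hf : ∀ z : V, HasFDerivAt (fun z : V => ⟪z, v⟫) (innerSL ℝ v) z := fun z => by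
    refine ((innerSL ℝ v).hasFDerivAt (x := z)).congr_of_eventuallyEq
      (Filter.Eventually.of_forall fun y => ?_)
    simp [real_inner_comm]
  have hk := fun z : V => hasFDerivAt_heatKernel t z
  have e1 : ∀ z : V, ⟪z, v⟫ * fderiv ℝ (heatKernel t) z v =
      -(1 / (2 * t)) * (⟪z, v⟫ ^ 2 * heatKernel t z) := fun z => by
    rw [(hk z).fderiv]
    simp
    ring
  have e2 : ∀ z : V, fderiv ℝ (fun z : V => ⟪z, v⟫) z v * heatKernel t z =
      ‖v‖ ^ 2 * heatKernel t z := fun z => by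
    rw [(hf z).fderiv]
    simp
  have h := integral_mul_fderiv_eq_neg_fderiv_mul_of_integrable (μ := (volume : Measure V))
    (f := fun z : V => ⟪z, v⟫) (g := heatKernel t) (v := v)
    (by simpa only [e2] using (integrable_heatKernel ht).const_mul _)
    (by simpa only [e1] using (integrable_inner_sq_mul_heatKernel ht v).const_mul _)
    (integrable_inner_mul_heatKernel ht v)
    (fun z _ => (hf z).differentiableAt) (fun z _ => (hk z).differentiableAt)
  simp only [e1, e2, integral_const_mul, integral_heatKernel ht] at h
  field_simp at h
  linarith

lemma integrable_heatDerivKernel (a b : V) {t : ℝ} (ht : 0 < t) :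
    Integrable (heatDerivKernel a b t) := by
  have h := ((integrable_heatKernel (V := V) ht).ofReal (𝕜 := ℂ)).sub
    (((integrable_inner_mul_heatKernel ht a).ofReal (𝕜 := ℂ)).const_mul (1 / (2 * t) : ℂ))
  have h' := h.sub (((integrable_inner_mul_heatKernel ht b).ofReal (𝕜 := ℂ)).const_mul
    (I / (2 * t) : ℂ))
  refine h'.congr (Filter.Eventually.of_forall fun z => ?_)
  simp [heatDerivKernel]
  ring

/-- The bound `E|1 - e·X/2t| ≤ (1 + t)/√(2t)` for a centred Gaussian vector `X` with covariance
`2t`. It follows from `E|1 - e·X/2t|² = 1 + ‖e‖²/2t ≤ ((1 + t)/√(2t))²`. -/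
lemma integral_norm_heatDerivKernel_le {a b : V} (hab : ‖a‖ ^ 2 + ‖b‖ ^ 2 ≤ 1) {t : ℝ}
    (ht : 0 < t) :
    ∫ z : V, ‖heatDerivKernel a b t z‖ ≤ (1 + t) / √(2 * t) := by
  set s : ℝ := (1 + t) / √(2 * t) with hs
  have hspos : 0 < s := by positivity
  have hs2 : s ^ 2 = (1 + t) ^ 2 / (2 * t) := by
    rw [hs, div_pow, Real.sq_sqrt (by positivity)]
  set F : V → ℝ := fun z => (s / 2 + 1 / (2 * s)) * heatKernel t z
    - (1 / (2 * s * t)) * (⟪z, a⟫ * heatKernel t z)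
    + (1 / (8 * s * t ^ 2)) * (⟪z, a⟫ ^ 2 * heatKernel t z)
    + (1 / (8 * s * t ^ 2)) * (⟪z, b⟫ ^ 2 * heatKernel t z) with hF
  have i0 := (integrable_heatKernel (V := V) ht).const_mul (s / 2 + 1 / (2 * s))
  have i1 := (integrable_inner_mul_heatKernel ht a).const_mul (1 / (2 * s * t))
  have i2 := (integrable_inner_sq_mul_heatKernel ht a).const_mul (1 / (8 * s * t ^ 2))
  have i3 := (integrable_inner_sq_mul_heatKernel ht b).const_mul (1 / (8 * s * t ^ 2))
  have hFi : Integrable F := ((i0.sub i1).add i2).add i3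
  have hle : ∀ z : V, ‖heatDerivKernel a b t z‖ ≤ F z := by
    intro z
    have h0 := heatKernel_nonneg ht z
    set w : ℂ := 1 - ⟪z, a⟫ / (2 * t) - I * (⟪z, b⟫ / (2 * t)) with hw
    have hwe : w = ((1 - ⟪z, a⟫ / (2 * t) : ℝ) : ℂ) + ((-(⟪z, b⟫ / (2 * t)) : ℝ) : ℂ) * I := by
      rw [hw]; push_cast; ring
    have hn : ‖w‖ ^ 2 = (1 - ⟪z, a⟫ / (2 * t)) ^ 2 + (⟪z, b⟫ / (2 * t)) ^ 2 := by
      rw [hwe, ← Complex.normSq_eq_norm_sq, Complex.normSq_add_mul_I]; ring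
    -- The AM-GM inequality replaces Cauchy-Schwarz for the first moment of `‖w‖`; the parameter
    -- `s` is the bound to be proved.
    have hamgm : ‖w‖ ≤ (s + ‖w‖ ^ 2 / s) / 2 := by
      have : 0 ≤ (s - ‖w‖) ^ 2 / s := by positivity
      have h2 : (s - ‖w‖) ^ 2 / s = s + ‖w‖ ^ 2 / s - 2 * ‖w‖ := by field_simp; ring
      linarith
    calc ‖heatDerivKernel a b t z‖ = ‖w‖ * heatKernel t z := by
          rw [heatDerivKernel, norm_mul, Complex.norm_real, Real.norm_of_nonneg h0]
      _ ≤ (s + ‖w‖ ^ 2 / s) / 2 * heatKernel t z := by gcongr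
      _ = F z := by
          rw [hn, hF]
          field_simp
          ring
  calc ∫ z : V, ‖heatDerivKernel a b t z‖ ≤ ∫ z, F z :=
        integral_mono (integrable_heatDerivKernel a b ht).norm hFi hle
    _ = (s / 2 + 1 / (2 * s)) + (1 / (4 * s * t)) * (‖a‖ ^ 2 + ‖b‖ ^ 2) := by
        have e := integral_add' ((i0.sub i1).add i2) i3
        rw [integral_add' (i0.sub i1) i2, integral_sub' i0 i1] at e
        refine e.trans ?_
        simp only [integral_const_mul, integral_heatKernel ht, integral_inner_mul_heatKernel,
          integral_inner_sq_mul_heatKernel ht]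
        field_simp
        ring
    _ ≤ (s / 2 + 1 / (2 * s)) + (1 / (4 * s * t)) * 1 := by gcongr
    _ ≤ s := by
        have : (1 + 1 / (2 * t)) ≤ s ^ 2 := by
          rw [hs2, show 1 + 1 / (2 * t) = (1 + 2 * t) / (2 * t) by field_simp; ring]
          gcongr
          nlinarith
        have h3 : (1 + 1 / (2 * t)) / (2 * s) ≤ s ^ 2 / (2 * s) := by gcongr
        have h4 : s ^ 2 / (2 * s) = s / 2 := by field_simp
        have h5 : (1 + 1 / (2 * t)) / (2 * s) = 1 / (2 * s) + 1 / (4 * s * t) * 1 := by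
          field_simp; ring
        linarith

/-- `∫₀^∞ e^{-t} (1 + t)/√(2t) dt = (Γ(1/2) + Γ(3/2))/√2 = (3/2)√(π/2) ≤ 2`. -/
lemma lintegral_exp_neg_mul_le_two :
    ∫⁻ t in Ioi (0 : ℝ), ENNReal.ofReal (Real.exp (-t) * ((1 + t) / √(2 * t))) ≤ 2 := by
  have i1 := Real.GammaIntegral_convergent (s := 1 / 2) (by norm_num)
  have i2 := Real.GammaIntegral_convergent (s := 1 / 2 + 1) (by norm_num)
  have he : ∀ t ∈ Ioi (0 : ℝ), Real.exp (-t) * ((1 + t) / √(2 * t)) =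
      (1 / √2) * (Real.exp (-t) * t ^ ((1 / 2 : ℝ) - 1) +
        Real.exp (-t) * t ^ ((1 / 2 : ℝ) + 1 - 1)) := by
    intro t ht
    have ht' : (0 : ℝ) < t := ht
    have h1 : t ^ ((1 / 2 : ℝ) - 1) = 1 / √t := by
      rw [show (1 / 2 : ℝ) - 1 = -(1 / 2) by norm_num, Real.rpow_neg ht'.le, ← Real.sqrt_eq_rpow,
        one_div]
    have h2 : t ^ ((1 / 2 : ℝ) + 1 - 1) = t / √t := by
      rw [add_sub_cancel_right, ← Real.sqrt_eq_rpow, Real.div_sqrt]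
    rw [h1, h2, Real.sqrt_mul (by norm_num)]
    field_simp
  have hi : IntegrableOn (fun t : ℝ => Real.exp (-t) * ((1 + t) / √(2 * t))) (Ioi 0) :=
    IntegrableOn.congr_fun ((i1.add i2).const_mul (1 / √2)) (fun t ht => (he t ht).symm)
      measurableSet_Ioi
  rw [← ofReal_integral_eq_lintegral_ofReal hi
    ((ae_restrict_iff' measurableSet_Ioi).2 (Filter.Eventually.of_forall fun t ht => by
      have : (0 : ℝ) < t := ht
      simp only [Pi.zero_apply]
      positivity))]
  rw [setIntegral_congr_fun measurableSet_Ioi he, integral_const_mul, integral_add i1 i2,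
    ← Real.Gamma_eq_integral (by norm_num), ← Real.Gamma_eq_integral (by norm_num),
    Real.Gamma_add_one (by norm_num), Real.Gamma_one_half_eq]
  refine ENNReal.ofReal_le_of_le_toReal ?_
  have h2 : (0 : ℝ) < √2 := by positivity
  have h3 : √Real.pi ≤ √2 * (4 / 3) := by
    rw [show √2 * (4 / 3) = √(2 * (4 / 3) ^ 2) by
      rw [Real.sqrt_mul (by norm_num), Real.sqrt_sq (by norm_num)]]
    exact Real.sqrt_le_sqrt (by linarith [Real.pi_lt_d2])
  rw [one_div_mul_eq_div, div_le_iff₀ h2]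
  norm_num
  linarith

/-! ### The representation of `(1 + ∂_e)(1 + Δ)⁻¹` by the heat semigroup -/

/-- The heat semigroup, in its Fourier and convolution forms. -/
lemma integral_gaussian_mul_fourier (f : SchwartzMap V ℂ) (x : V) {t : ℝ} (ht : 0 < t) :
    ∫ ξ : V, cexp (-(4 * Real.pi ^ 2 * t : ℝ) * ‖ξ‖ ^ 2 + 2 * Real.pi * I * ⟪x, ξ⟫) * 𝓕 f ξ =
      ∫ y : V, (heatKernel t (x - y) : ℂ) * f y := by
  have hb : 0 < (((4 * Real.pi ^ 2 * t : ℝ) : ℂ)).re := by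
    rw [ofReal_re]; positivity
  have J : Integrable (fun ξ : V =>
      cexp (-(4 * Real.pi ^ 2 * t : ℝ) * ‖ξ‖ ^ 2 + 2 * Real.pi * I * ⟪x, ξ⟫)) :=
    GaussianFourier.integrable_cexp_neg_mul_sq_norm_add hb _ _
  have h := VectorFourier.integral_fourierIntegral_smul_eq_flip (L := innerₗ V)
      Real.continuous_fourierChar continuous_inner J (f.integrable (μ := volume))
  have h' : ∫ y : V, 𝓕 (fun ξ : V =>
        cexp (-(4 * Real.pi ^ 2 * t : ℝ) * ‖ξ‖ ^ 2 + 2 * Real.pi * I * ⟪x, ξ⟫)) y * f y =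
      ∫ ξ : V, cexp (-(4 * Real.pi ^ 2 * t : ℝ) * ‖ξ‖ ^ 2 + 2 * Real.pi * I * ⟪x, ξ⟫) *
        𝓕 f ξ := by
    simpa using! h
  rw [← h']
  refine integral_congr_ae (Filter.Eventually.of_forall fun y => ?_)
  simp only
  congr 1
  rw [fourier_gaussian_innerProductSpace' hb]
  unfold heatKernel
  push_cast
  rw [Complex.ofReal_cpow (by positivity)]
  congr 1
  · rw [show (Real.pi : ℂ) / (4 * Real.pi ^ 2 * t) = ((1 / (4 * Real.pi * t) : ℝ) : ℂ) by
      push_cast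
      field_simp,
      show (Module.finrank ℝ V / 2 : ℂ) = ((Module.finrank ℝ V / 2 : ℝ) : ℂ) by push_cast; rfl,
      ← Complex.ofReal_cpow (by positivity), ← Complex.ofReal_cpow (by positivity)]
    congr 1
    rw [Real.rpow_neg (by positivity), ← Real.inv_rpow (by positivity), one_div]
  · congr 1
    field_simp

/-- Integration by parts moves `1 + ∂_e` from the function onto the heat kernel. -/
lemma integral_heatKernel_mul_onePlusDeriv (a b : V) (f : SchwartzMap V ℂ) (x : V) {t : ℝ}
    (ht : 0 < t) :
    ∫ y : V, (heatKernel t (x - y) : ℂ) * onePlusDeriv a b f y =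
      ∫ y : V, heatDerivKernel a b t (x - y) * f y := by
  set k : V → ℂ := fun y => (heatKernel t (x - y) : ℂ) with hkdef
  have hk : ∀ y : V, HasFDerivAt k
      (ofRealCLM.comp (((1 / (2 * t)) * heatKernel t (x - y)) • innerSL ℝ (x - y))) y := by
    intro y
    have h1 := (hasFDerivAt_heatKernel t (x - y)).comp y ((hasFDerivAt_id y).const_sub x)
    have h2 := (ofRealCLM.hasFDerivAt (x := heatKernel t (x - y))).comp y h1
    refine h2.congr_fderiv ?_
    ext v
    simp
  have hkv : ∀ y v : V, fderiv ℝ k y v = 1 / (2 * t) * (⟪x - y, v⟫ * heatKernel t (x - y) : ℝ) := by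
    intro y v
    rw [(hk y).fderiv]
    simp [inner_sub_left]
    ring
  have bdd : ∀ (p : V → ℂ), Integrable p → ∀ g : SchwartzMap V ℂ,
      Integrable (fun y => p y * g y) := fun p hp g =>
    hp.mul_bdd (c := SchwartzMap.seminorm ℝ 0 0 g) g.continuous.aestronglyMeasurable
      (Filter.Eventually.of_forall fun y => g.norm_le_seminorm ℝ y)
  have ik : Integrable k := ((integrable_heatKernel ht).comp_sub_left x).ofReal
  have ikv : ∀ v : V, Integrable (fun y => fderiv ℝ k y v) := fun v => by
    simp only [hkv]
    exact (((integrable_inner_mul_heatKernel ht v).comp_sub_left x).ofReal (𝕜 := ℂ)).const_mul _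
  have hfd : ∀ v : V, ∀ y, fderiv ℝ f y v = (∂_{v} f) y := fun v y =>
    (SchwartzMap.lineDerivOp_apply_eq_fderiv v f y).symm
  have ibp : ∀ v : V, ∫ y, k y * (∂_{v} f) y = -∫ y, fderiv ℝ k y v * f y := by
    intro v
    have := integral_mul_fderiv_eq_neg_fderiv_mul_of_integrable (μ := (volume : Measure V))
      (f := k) (g := f) (v := v) (bdd _ (ikv v) f)
      (by simpa only [hfd] using bdd _ ik (∂_{v} f)) (bdd _ ik f)
      (fun y _ => (hk y).differentiableAt) (fun y _ => f.differentiableAt)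
    simpa only [hfd] using this
  have j0 := bdd _ ik f
  have ja := bdd _ ik (∂_{a} f)
  have jb := (bdd _ ik (∂_{b} f)).const_mul I
  have ea := bdd _ (ikv a) f
  have eb := (bdd _ (ikv b) f).const_mul I
  calc ∫ y, k y * onePlusDeriv a b f y
      = ∫ y, ((k y * f y + k y * (∂_{a} f) y) + I * (k y * (∂_{b} f) y)) := by
        congr 1 with y
        rw [onePlusDeriv_apply, hfd, hfd]
        ring
    _ = ((∫ y, k y * f y) - ∫ y, fderiv ℝ k y a * f y) - I * ∫ y, fderiv ℝ k y b * f y := by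
        have e := integral_add' (j0.add ja) jb
        rw [integral_add' j0 ja, integral_const_mul, ibp, ibp] at e
        refine e.trans ?_
        ring
    _ = ∫ y, ((k y * f y - fderiv ℝ k y a * f y) - I * (fderiv ℝ k y b * f y)) := by
        have e := integral_sub' (j0.sub ea) eb
        rw [integral_sub' j0 ea, integral_const_mul] at e
        exact e.symm
    _ = ∫ y, heatDerivKernel a b t (x - y) * f y := by
        congr 1 with y
        rw [hkv, hkv, hkdef, heatDerivKernel]
        push_cast
        ring

/-- Since `(1 + Δ)⁻¹ = ∫₀^∞ e^{-t} e^{-tΔ} dt`, the function `(1 + ∂_e) g` is an average over `t`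
of the convolutions of `(1 + Δ) g` with the kernels `heatDerivKernel`. -/
lemma onePlusDeriv_eq_integral (a b : V) (g : SchwartzMap V ℂ) (x : V) :
    onePlusDeriv a b g x = ∫ t in Ioi (0 : ℝ), (Real.exp (-t) : ℂ) *
      ∫ y : V, heatDerivKernel a b t (x - y) * onePlusLap g y := by
  set w : SchwartzMap V ℂ := onePlusDeriv a b (onePlusLap g) with hw
  have hinv : onePlusDeriv a b g x =
      ∫ ξ : V, cexp (2 * Real.pi * I * ⟪x, ξ⟫) * 𝓕 (onePlusDeriv a b g) ξ := by
    have h1 : 𝓕⁻ (𝓕 (onePlusDeriv a b g)) = onePlusDeriv a b g := by simp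
    conv_lhs => rw [← h1]
    rw [SchwartzMap.fourierInv_coe, Real.fourierInv_eq']
    refine integral_congr_ae (Filter.Eventually.of_forall fun ξ => ?_)
    simp only [smul_eq_mul, real_inner_comm x ξ]
    congr 2
    push_cast
    ring
  -- Dividing `𝓕 w` by `1 + 4π²‖ξ‖²` is integration of `exp (-(1 + 4π²‖ξ‖²) t)` over `t`.
  set G : V → ℝ → ℂ := fun ξ t => (Real.exp (-t) : ℂ) *
    (cexp (-(4 * Real.pi ^ 2 * t : ℝ) * ‖ξ‖ ^ 2 + 2 * Real.pi * I * ⟪x, ξ⟫) * 𝓕 w ξ) with hG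
  have hGt : ∀ ξ : V, ∫ t in Ioi (0 : ℝ), G ξ t =
      cexp (2 * Real.pi * I * ⟪x, ξ⟫) * 𝓕 (onePlusDeriv a b g) ξ := by
    intro ξ
    set c : ℝ := 1 + 4 * Real.pi ^ 2 * ‖ξ‖ ^ 2 with hc
    have hcpos : 0 < c := by positivity
    have hwξ : 𝓕 w ξ = c * 𝓕 (onePlusDeriv a b g) ξ := by
      rw [hw, onePlusDeriv_onePlusLap, fourier_onePlusLap]
    have e1 : ∀ t : ℝ, G ξ t = (cexp (2 * Real.pi * I * ⟪x, ξ⟫) * 𝓕 w ξ) *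
        ((Real.exp (-c * t) : ℝ) : ℂ) := by
      intro t
      have : cexp (-(4 * Real.pi ^ 2 * t : ℝ) * ‖ξ‖ ^ 2 + 2 * Real.pi * I * ⟪x, ξ⟫) =
          cexp (-(4 * Real.pi ^ 2 * t : ℝ) * ‖ξ‖ ^ 2) * cexp (2 * Real.pi * I * ⟪x, ξ⟫) :=
        Complex.exp_add _ _
      rw [hG]
      simp only [this]
      have h2 : ((Real.exp (-c * t) : ℝ) : ℂ) =
          (Real.exp (-t) : ℂ) * cexp (-(4 * Real.pi ^ 2 * t : ℝ) * ‖ξ‖ ^ 2) := by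
        push_cast
        rw [← Complex.exp_add]
        congr 1
        rw [hc]
        push_cast
        ring
      rw [h2]
      ring
    simp only [e1]
    rw [integral_const_mul, integral_complex_ofReal, integral_exp_mul_Ioi (by linarith) 0, hwξ]
    have : (c : ℂ) ≠ 0 := by exact_mod_cast hcpos.ne'
    push_cast
    simp
    field_simp
  -- The Gaussian factor of `G` is only bounded by `1`; decay comes from `𝓕 w` and `e^{-t}`.
  have hGint : Integrable (Function.uncurry G) (volume.prod (volume.restrict (Ioi (0 : ℝ)))) := by
    have hexp : IntegrableOn (fun t : ℝ => Real.exp (-t)) (Ioi 0) := by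
      simpa using exp_neg_integrableOn_Ioi 0 one_pos
    have h1 : Integrable (fun p : V × ℝ => ‖𝓕 w p.1‖ * Real.exp (-p.2))
        (volume.prod (volume.restrict (Ioi (0 : ℝ)))) :=
      (SchwartzMap.integrable (μ := volume) (𝓕 w)).norm.mul_prod hexp
    refine h1.mono' ?_ ?_
    · have := (𝓕 w : SchwartzMap V ℂ).continuous
      refine Continuous.aestronglyMeasurable ?_
      simp only [hG, Function.uncurry_def]
      fun_prop
    · have : ∀ᵐ p : V × ℝ ∂(volume.prod (volume.restrict (Ioi (0 : ℝ)))), 0 < p.2 :=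
        Measure.quasiMeasurePreserving_snd.ae (ae_restrict_mem measurableSet_Ioi)
      filter_upwards [this] with p hp
      simp only [hG, Function.uncurry_def, norm_mul, Complex.norm_exp, Complex.norm_real,
        Real.norm_of_nonneg (Real.exp_pos _).le]
      have : (-(4 * Real.pi ^ 2 * p.2 : ℝ) * (‖p.1‖ : ℂ) ^ 2 +
          2 * Real.pi * I * ⟪x, p.1⟫).re ≤ 0 := by
        have e : (-(4 * Real.pi ^ 2 * p.2 : ℝ) * (‖p.1‖ : ℂ) ^ 2 +
          2 * Real.pi * I * ⟪x, p.1⟫) = ((-(4 * Real.pi ^ 2 * p.2 * ‖p.1‖ ^ 2) : ℝ) : ℂ) +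
            ((2 * Real.pi * ⟪x, p.1⟫ : ℝ) : ℂ) * I := by
          push_cast
          ring
        rw [e, Complex.add_re, Complex.re_ofReal_mul, Complex.I_re, Complex.ofReal_re]
        have : 0 ≤ 4 * Real.pi ^ 2 * p.2 * ‖p.1‖ ^ 2 := by positivity
        linarith
      have h2 := Real.exp_le_one_iff.2 this
      calc _ ≤ Real.exp (-p.2) * (1 * ‖𝓕 w p.1‖) := by gcongr
        _ = _ := by ring
  rw [hinv, ← integral_congr_ae (Filter.Eventually.of_forall hGt), integral_integral_swap hGint]
  refine setIntegral_congr_fun measurableSet_Ioi fun t ht => ?_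
  simp only [hG, integral_const_mul]
  rw [integral_gaussian_mul_fourier w x ht, hw, integral_heatKernel_mul_onePlusDeriv a b _ x ht]

/-! ### The `L¹` bounds -/

/-- The `L¹` estimate behind the theorem: the kernel of `(1 + ∂_e)(1 + Δ)⁻¹` has mass at most
`2`, uniformly in the dimension. -/
lemma integral_norm_onePlusDeriv_le {a b : V} (hab : ‖a‖ ^ 2 + ‖b‖ ^ 2 ≤ 1)
    (g : SchwartzMap V ℂ) :
    ∫ x, ‖onePlusDeriv a b g x‖ ≤ 2 * ∫ x, ‖onePlusLap g x‖ := by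
  set w := onePlusLap g with hw
  have hm : Measurable (fun p : ℝ × V => heatDerivKernel a b p.1 p.2) := by
    unfold heatDerivKernel heatKernel
    fun_prop
  have hwm : Measurable w := w.continuous.measurable
  have hpt : ∀ x : V, ‖onePlusDeriv a b g x‖ₑ ≤
      ∫⁻ t in Ioi (0 : ℝ), ENNReal.ofReal (Real.exp (-t)) *
        ∫⁻ y : V, ‖heatDerivKernel a b t (x - y)‖ₑ * ‖w y‖ₑ := by
    intro x
    rw [onePlusDeriv_eq_integral]
    refine (enorm_integral_le_lintegral_enorm _).trans (lintegral_mono fun t => ?_)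
    rw [enorm_mul]
    gcongr
    · rw [← ofReal_norm, Complex.norm_real, Real.norm_of_nonneg (Real.exp_pos _).le]
    · refine (enorm_integral_le_lintegral_enorm _).trans (lintegral_mono fun y => ?_)
      rw [enorm_mul]
  have hker : ∀ t ∈ Ioi (0 : ℝ), ∫⁻ z : V, ‖heatDerivKernel a b t z‖ₑ ≤
      ENNReal.ofReal ((1 + t) / √(2 * t)) := fun t ht => by
    rw [← ofReal_integral_norm_eq_lintegral_enorm (integrable_heatDerivKernel a b ht)]
    exact ENNReal.ofReal_le_ofReal (integral_norm_heatDerivKernel_le hab ht)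
  have hm3 : Measurable (fun p : (V × ℝ) × V =>
      ‖heatDerivKernel a b p.1.2 (p.1.1 - p.2)‖ₑ * ‖w p.2‖ₑ) := by
    have h1 : Measurable (fun p : (V × ℝ) × V => heatDerivKernel a b p.1.2 (p.1.1 - p.2)) :=
      hm.comp (g := fun p : ℝ × V => heatDerivKernel a b p.1 p.2)
        (f := fun p : (V × ℝ) × V => (p.1.2, p.1.1 - p.2)) (by fun_prop)
    exact h1.enorm.mul (hwm.comp measurable_snd).enorm
  have hm2 : Measurable (fun p : V × ℝ => ENNReal.ofReal (Real.exp (-p.2)) *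
      ∫⁻ y : V, ‖heatDerivKernel a b p.2 (p.1 - y)‖ₑ * ‖w y‖ₑ) :=
    Measurable.mul (by fun_prop) hm3.lintegral_prod_right'
  have hle : ∫⁻ x, ‖onePlusDeriv a b g x‖ₑ ≤ 2 * ∫⁻ x, ‖w x‖ₑ := by
    calc ∫⁻ x, ‖onePlusDeriv a b g x‖ₑ
        ≤ ∫⁻ x, ∫⁻ t in Ioi (0 : ℝ), ENNReal.ofReal (Real.exp (-t)) *
          ∫⁻ y : V, ‖heatDerivKernel a b t (x - y)‖ₑ * ‖w y‖ₑ := lintegral_mono hpt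
      _ = ∫⁻ t in Ioi (0 : ℝ), ∫⁻ x, ENNReal.ofReal (Real.exp (-t)) *
          ∫⁻ y : V, ‖heatDerivKernel a b t (x - y)‖ₑ * ‖w y‖ₑ :=
        lintegral_lintegral_swap hm2.aemeasurable
      _ = ∫⁻ t in Ioi (0 : ℝ), ENNReal.ofReal (Real.exp (-t)) *
          ((∫⁻ z : V, ‖heatDerivKernel a b t z‖ₑ) * ∫⁻ y, ‖w y‖ₑ) := by
        congr 1 with t
        have hmt : Measurable (fun p : V × V =>
            ‖heatDerivKernel a b t (p.1 - p.2)‖ₑ * ‖w p.2‖ₑ) :=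
          hm3.comp (g := fun p : (V × ℝ) × V =>
            ‖heatDerivKernel a b p.1.2 (p.1.1 - p.2)‖ₑ * ‖w p.2‖ₑ)
            (f := fun p : V × V => ((p.1, t), p.2)) (by fun_prop)
        rw [lintegral_const_mul _ hmt.lintegral_prod_right',
          lintegral_lintegral_swap hmt.aemeasurable]
        congr 1
        have hkt : Measurable (heatDerivKernel a b t) :=
          hm.comp (g := fun p : ℝ × V => heatDerivKernel a b p.1 p.2)
            (f := fun z : V => (t, z)) (by fun_prop)
        rw [← lintegral_const_mul _ hwm.enorm]
        refine lintegral_congr fun y => ?_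
        dsimp only
        rw [lintegral_mul_const _ (by fun_prop),
          lintegral_sub_right_eq_self (fun z => ‖heatDerivKernel a b t z‖ₑ) y]
      _ ≤ ∫⁻ t in Ioi (0 : ℝ), ENNReal.ofReal (Real.exp (-t) * ((1 + t) / √(2 * t))) *
          ∫⁻ y, ‖w y‖ₑ := by
        refine setLIntegral_mono' measurableSet_Ioi fun t ht => ?_
        rw [ENNReal.ofReal_mul (Real.exp_pos _).le, mul_assoc]
        gcongr
        exact hker t ht
      _ ≤ 2 * ∫⁻ y, ‖w y‖ₑ := by
        rw [lintegral_mul_const _ (by fun_prop)]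
        gcongr
        exact lintegral_exp_neg_mul_le_two
  rw [← ofReal_integral_norm_eq_lintegral_enorm (SchwartzMap.integrable (μ := volume) _),
    ← ofReal_integral_norm_eq_lintegral_enorm (SchwartzMap.integrable (μ := volume) w),
    show (2 : ℝ≥0∞) = ENNReal.ofReal 2 by simp, ← ENNReal.ofReal_mul (by norm_num)] at hle
  exact (ENNReal.ofReal_le_ofReal_iff
    (mul_nonneg (by norm_num) (integral_nonneg fun _ => norm_nonneg _))).1 hle

lemma integral_norm_iterate_onePlusDeriv_le {a b : V} (hab : ‖a‖ ^ 2 + ‖b‖ ^ 2 ≤ 1) (N : ℕ)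
    (g : SchwartzMap V ℂ) :
    ∫ x, ‖(onePlusDeriv a b)^[N] g x‖ ≤ 2 ^ N * ∫ x, ‖onePlusLap^[N] g x‖ := by
  induction N generalizing g with
  | zero => simp
  | succ N ih =>
    rw [Function.iterate_succ_apply, Function.iterate_succ_apply']
    calc _ ≤ 2 ^ N * ∫ x, ‖onePlusLap^[N] (onePlusDeriv a b g) x‖ := ih _
      _ ≤ 2 ^ N * (2 * ∫ x, ‖onePlusLap (onePlusLap^[N] g) x‖) := by
        rw [← onePlusDeriv_iterate_onePlusLap]
        gcongr
        exact integral_norm_onePlusDeriv_le hab _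
      _ = _ := by ring

/-! ### The Fourier-Laplace transform -/

omit [FiniteDimensional ℝ V] [MeasurableSpace V] [BorelSpace V] in
lemma hasFDerivAt_cexp_neg (η ζ : V →L[ℝ] ℝ) (x : V) :
    HasFDerivAt (fun x : V => cexp (-((η x : ℂ) + (ζ x : ℂ) * I)))
      (cexp (-((η x : ℂ) + (ζ x : ℂ) * I)) •
        -(ofRealCLM.comp η + I • ofRealCLM.comp ζ)) x := by
  have h : HasFDerivAt (fun x : V => -((η x : ℂ) + (ζ x : ℂ) * I))
      (-(ofRealCLM.comp η + I • ofRealCLM.comp ζ)) x := by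
    refine (-(ofRealCLM.comp η + I • ofRealCLM.comp ζ)).hasFDerivAt.congr_of_eventuallyEq
      (Filter.Eventually.of_forall fun y => ?_)
    simp
    ring
  exact h.cexp

/-- Both assertions hold because the integrand is dominated by `M * ‖f x‖`. -/
lemma norm_integral_cexp_mul_le {η ζ : V →L[ℝ] ℝ} {S : Set V} {M : ℝ}
    (hM : ∀ x ∈ S, ‖cexp (-((η x : ℂ) + (ζ x : ℂ) * I))‖ ≤ M) {f : SchwartzMap V ℂ}
    (hf : tsupport f ⊆ S) :
    Integrable (fun x => cexp (-((η x : ℂ) + (ζ x : ℂ) * I)) * f x) ∧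
      ‖∫ x, cexp (-((η x : ℂ) + (ζ x : ℂ) * I)) * f x‖ ≤ M * ∫ x, ‖f x‖ := by
  have hfi : Integrable (fun x => M * ‖f x‖) :=
    (SchwartzMap.integrable (μ := volume) f).norm.const_mul M
  have hb : ∀ x, ‖cexp (-((η x : ℂ) + (ζ x : ℂ) * I)) * f x‖ ≤ M * ‖f x‖ := by
    intro x
    by_cases hx : x ∈ S
    · rw [norm_mul]
      gcongr
      exact hM x hx
    · rw [image_eq_zero_of_notMem_tsupport fun h => hx (hf h)]
      simp
  refine ⟨hfi.mono' ?_ (Filter.Eventually.of_forall hb), ?_⟩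
  · have := f.continuous
    exact Continuous.aestronglyMeasurable (by fun_prop)
  · rw [← integral_const_mul]
    exact norm_integral_le_of_norm_le hfi (Filter.Eventually.of_forall hb)

/-- Under the transform at `μ = η + i ζ`, the operator `1 + ∂_e` becomes multiplication by
`1 + μ(e)`. -/
lemma integral_cexp_mul_onePlusDeriv (a b : V) {η ζ : V →L[ℝ] ℝ} {S : Set V} {M : ℝ}
    (hM : ∀ x ∈ S, ‖cexp (-((η x : ℂ) + (ζ x : ℂ) * I))‖ ≤ M) {f : SchwartzMap V ℂ}
    (hf : tsupport f ⊆ S) :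
    ∫ x, cexp (-((η x : ℂ) + (ζ x : ℂ) * I)) * onePlusDeriv a b f x =
      (1 + ((η a : ℂ) + (ζ a : ℂ) * I) + I * ((η b : ℂ) + (ζ b : ℂ) * I)) *
        ∫ x, cexp (-((η x : ℂ) + (ζ x : ℂ) * I)) * f x := by
  set k : V → ℂ := fun x => cexp (-((η x : ℂ) + (ζ x : ℂ) * I)) with hkdef
  have hk := hasFDerivAt_cexp_neg η ζ
  have hkv : ∀ y v : V, fderiv ℝ k y v = -((η v : ℂ) + (ζ v : ℂ) * I) * k y := by
    intro y v
    rw [(hk y).fderiv]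
    simp [hkdef]
    ring
  have hfd : ∀ v : V, ∀ y, fderiv ℝ f y v = (∂_{v} f) y := fun v y =>
    (SchwartzMap.lineDerivOp_apply_eq_fderiv v f y).symm
  have i0 : Integrable (fun x => k x * f x) := (norm_integral_cexp_mul_le hM hf).1
  have iv : ∀ v : V, Integrable (fun x => k x * (∂_{v} f) x) := fun v =>
    (norm_integral_cexp_mul_le hM ((SchwartzMap.tsupport_lineDerivOp_subset v f).trans hf)).1
  have ibp : ∀ v : V, ∫ y, k y * (∂_{v} f) y = ((η v : ℂ) + (ζ v : ℂ) * I) * ∫ y, k y * f y := by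
    intro v
    have := integral_mul_fderiv_eq_neg_fderiv_mul_of_integrable (μ := (volume : Measure V))
      (f := k) (g := f) (v := v)
      (by simpa only [hkv, mul_assoc] using i0.const_mul (-((η v : ℂ) + (ζ v : ℂ) * I)))
      (by simpa only [hfd] using iv v) i0
      (fun y _ => (hk y).differentiableAt) (fun y _ => f.differentiableAt)
    simp only [hfd, hkv, mul_assoc] at this
    rw [this, integral_const_mul]
    ring
  have e1 : ∫ x, k x * onePlusDeriv a b f x =
      ∫ x, ((k x * f x + k x * (∂_{a} f) x) + I * (k x * (∂_{b} f) x)) := by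
    congr 1 with y
    rw [onePlusDeriv_apply, hfd, hfd]
    ring
  have e := integral_add' (i0.add (iv a)) ((iv b).const_mul I)
  rw [integral_add' i0 (iv a), integral_const_mul, ibp, ibp] at e
  rw [e1]
  refine e.trans ?_
  ring

lemma integral_cexp_mul_iterate_onePlusDeriv (a b : V) {η ζ : V →L[ℝ] ℝ} {S : Set V} {M : ℝ}
    (hM : ∀ x ∈ S, ‖cexp (-((η x : ℂ) + (ζ x : ℂ) * I))‖ ≤ M) (N : ℕ) {f : SchwartzMap V ℂ}
    (hf : tsupport f ⊆ S) :
    tsupport ((onePlusDeriv a b)^[N] f) ⊆ S ∧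
    ∫ x, cexp (-((η x : ℂ) + (ζ x : ℂ) * I)) * (onePlusDeriv a b)^[N] f x =
      (1 + ((η a : ℂ) + (ζ a : ℂ) * I) + I * ((η b : ℂ) + (ζ b : ℂ) * I)) ^ N *
        ∫ x, cexp (-((η x : ℂ) + (ζ x : ℂ) * I)) * f x := by
  induction N with
  | zero => simpa using hf
  | succ N ih =>
    rw [Function.iterate_succ_apply']
    refine ⟨(tsupport_onePlusDeriv_subset a b _).trans ih.1, ?_⟩
    rw [integral_cexp_mul_onePlusDeriv a b hM ih.1, ih.2]
    ring

omit [MeasurableSpace V] [BorelSpace V] in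
/-- A direction `e = a + i b` of length at most one in the complexification of `V` on which
`μ = η + i ζ` takes the value `|μ|`. -/
lemma exists_direction (η ζ : V →L[ℝ] ℝ) : ∃ a b : V, ‖a‖ ^ 2 + ‖b‖ ^ 2 ≤ 1 ∧
    ((η a : ℂ) + (ζ a : ℂ) * I) + I * ((η b : ℂ) + (ζ b : ℂ) * I) =
      (√(‖η‖ ^ 2 + ‖ζ‖ ^ 2) : ℝ) := by
  set m : ℝ := √(‖η‖ ^ 2 + ‖ζ‖ ^ 2) with hm
  have hm2 : m ^ 2 = ‖η‖ ^ 2 + ‖ζ‖ ^ 2 := Real.sq_sqrt (by positivity)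
  set p := (InnerProductSpace.toDual ℝ V).symm η with hp
  set q := (InnerProductSpace.toDual ℝ V).symm ζ with hq
  have hpn : ‖p‖ = ‖η‖ := LinearIsometryEquiv.norm_map _ _
  have hqn : ‖q‖ = ‖ζ‖ := LinearIsometryEquiv.norm_map _ _
  have hη : ∀ x, η x = ⟪p, x⟫ := fun x => by rw [hp, InnerProductSpace.toDual_symm_apply]
  have hζ : ∀ x, ζ x = ⟪q, x⟫ := fun x => by rw [hq, InnerProductSpace.toDual_symm_apply]
  by_cases h0 : m = 0
  · exact ⟨0, 0, by simp, by simp [h0]⟩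
  refine ⟨m⁻¹ • p, -(m⁻¹ • q), ?_, ?_⟩
  · rw [norm_neg, norm_smul, norm_smul, mul_pow, mul_pow, ← mul_add, hpn, hqn, ← hm2,
      Real.norm_eq_abs, sq_abs, inv_pow, inv_mul_cancel₀ (pow_ne_zero 2 h0)]
  · have h1 : η (m⁻¹ • p) - ζ (-(m⁻¹ • q)) = m := by
      rw [hη, hζ, inner_neg_right, real_inner_smul_right, real_inner_smul_right,
        real_inner_self_eq_norm_sq, real_inner_self_eq_norm_sq, hpn, hqn]
      field_simp
      linarith
    have h2 : ζ (m⁻¹ • p) + η (-(m⁻¹ • q)) = 0 := by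
      rw [hη, hζ, inner_neg_right, real_inner_smul_right, real_inner_smul_right,
        real_inner_comm p q]
      ring
    apply Complex.ext
    · simpa [sub_eq_add_neg] using h1
    · simpa using h2

/-- The estimate for the transform of a Schwartz function supported in a closed set on which
`e^{-μ}`, `μ = η + i ζ`, is bounded. -/
lemma pow_mul_norm_integral_cexp_mul_le {η ζ : V →L[ℝ] ℝ} {S : Set V} {M : ℝ} (hM0 : 0 ≤ M)
    (hM : ∀ x ∈ S, ‖cexp (-((η x : ℂ) + (ζ x : ℂ) * I))‖ ≤ M) (N : ℕ) {g : SchwartzMap V ℂ}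
    (hg : tsupport g ⊆ S) :
    (1 + √(‖η‖ ^ 2 + ‖ζ‖ ^ 2)) ^ N * ‖∫ x, cexp (-((η x : ℂ) + (ζ x : ℂ) * I)) * g x‖ ≤
      M * (2 ^ N * ∫ x, ‖onePlusLapPow N g x‖) := by
  obtain ⟨a, b, hab, he⟩ := exists_direction η ζ
  obtain ⟨hs, hi⟩ := integral_cexp_mul_iterate_onePlusDeriv a b hM N hg
  have h := (norm_integral_cexp_mul_le hM hs).2
  rw [hi, add_assoc, he, norm_mul, norm_pow, ← ofReal_one, ← ofReal_add, Complex.norm_real,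
    Real.norm_of_nonneg (by positivity)] at h
  rw [onePlusLapPow_coe]
  refine h.trans ?_
  gcongr
  exact integral_norm_iterate_onePlusDeriv_le hab N g

omit [FiniteDimensional ℝ V] [MeasurableSpace V] [BorelSpace V] in
lemma one_add_sqrt_le (ν ν₀ ζ : V →L[ℝ] ℝ) :
    1 + √(‖ν‖ ^ 2 + ‖ζ‖ ^ 2) ≤ (1 + ‖ν₀‖) * (1 + √(‖ν - ν₀‖ ^ 2 + ‖ζ‖ ^ 2)) := by
  set m : ℝ := √(‖ν - ν₀‖ ^ 2 + ‖ζ‖ ^ 2) with hm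
  have hm2 : m ^ 2 = ‖ν - ν₀‖ ^ 2 + ‖ζ‖ ^ 2 := Real.sq_sqrt (by positivity)
  have hm0 : 0 ≤ m := Real.sqrt_nonneg _
  have h1 : ‖ν‖ ≤ ‖ν - ν₀‖ + ‖ν₀‖ := by simpa using norm_add_le (ν - ν₀) ν₀
  have h2 : ‖ν - ν₀‖ ≤ m := Real.le_sqrt_of_sq_le (by nlinarith [norm_nonneg ζ])
  have h3 : √(‖ν‖ ^ 2 + ‖ζ‖ ^ 2) ≤ m + ‖ν₀‖ := by
    refine Real.sqrt_le_iff.2 ⟨by positivity, ?_⟩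
    have := pow_le_pow_left₀ (norm_nonneg ν) h1 2
    nlinarith [mul_le_mul_of_nonneg_right h2 (norm_nonneg ν₀)]
  nlinarith [mul_nonneg hm0 (norm_nonneg ν₀)]

end FourierLaplaceEstimate

theorem stmt18 (V : Type*) [NormedAddCommGroup V] [InnerProductSpace ℝ V]
    [FiniteDimensional ℝ V] [MeasurableSpace V] [BorelSpace V]
    (B Γ : Set V) (hB : IsCompact B) (hΓcl : IsClosed Γ)
    (hΓcone : ∀ r : ℝ, 0 < r → ∀ x ∈ Γ, r • x ∈ Γ) (h0 : (0 : V) ∈ Γ)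
    (ν₀ : V →L[ℝ] ℝ) (hν₀ : ∀ x ∈ Γ, 0 ≤ ν₀ x) (N : ℕ)
    (u : V → ℂ) (hu : ContDiff ℝ (⊤ : ℕ∞) u) (hsupp : Function.support u ⊆ B + Γ)
    (g : SchwartzMap V ℂ) (hg : ∀ x, g x = Real.exp (-ν₀ x) • u x)
    (ν ζ : V →L[ℝ] ℝ) (hν : ∀ x ∈ Γ, ν₀ x ≤ ν x) :
    ‖∫ x : V, Complex.exp (-((ν x : ℂ) + (ζ x : ℂ) * Complex.I)) * u x‖ ≤
      (2 ^ N * (1 + ‖ν₀‖) ^ N * Real.exp (sSup ((fun x => ν₀ x) '' B))) *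
        (∫ x : V, ‖onePlusLapPow N (⇑g) x‖) *
        ((1 + Real.sqrt (‖ν‖ ^ 2 + ‖ζ‖ ^ 2)) ^ N)⁻¹ *
        Real.exp (sSup ((fun x => -ν x) '' B)) := by
  have hshift : ∫ x : V, Complex.exp (-((ν x : ℂ) + (ζ x : ℂ) * Complex.I)) * u x =
      ∫ x : V, Complex.exp (-(((ν - ν₀) x : ℂ) + (ζ x : ℂ) * Complex.I)) * g x := by
    congr 1 with x
    rw [hg, Complex.real_smul, ← mul_assoc, Complex.ofReal_exp, ← Complex.exp_add]
    congr 2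
    simp
    ring
  have hgsupp : tsupport g ⊆ B + Γ := by
    refine closure_minimal (fun x hx => hsupp fun h => hx ?_) (hΓcl.add_left_of_isCompact hB)
    rw [hg, h, smul_zero]
  -- For `B = ∅` the suprema are junk values, but then the bound below holds vacuously.
  set H₀ := sSup ((fun x => ν₀ x) '' B) with hH₀
  set H := sSup ((fun x => -ν x) '' B) with hH
  have hM : ∀ x ∈ B + Γ, ‖Complex.exp (-(((ν - ν₀) x : ℂ) + (ζ x : ℂ) * Complex.I))‖ ≤
      Real.exp H₀ * Real.exp H := by
    rintro _ ⟨y, hy, z, hz, rfl⟩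
    have h1 : ν₀ y ≤ H₀ := le_csSup (hB.image (by fun_prop)).bddAbove ⟨y, hy, rfl⟩
    have h2 : -ν y ≤ H := le_csSup (hB.image (by fun_prop)).bddAbove ⟨y, hy, rfl⟩
    have h3 := hν z hz
    rw [Complex.norm_exp, ← Real.exp_add]
    refine Real.exp_le_exp.2 ?_
    simp
    linarith
  have key := FourierLaplaceEstimate.pow_mul_norm_integral_cexp_mul_le
    (by positivity) hM N hgsupp
  rw [hshift]
  set A := ‖∫ x : V, Complex.exp (-(((ν - ν₀) x : ℂ) + (ζ x : ℂ) * Complex.I)) * g x‖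
  have hpow := pow_le_pow_left₀ (by positivity)
    (FourierLaplaceEstimate.one_add_sqrt_le ν ν₀ ζ) N
  have hpos : 0 < (1 + Real.sqrt (‖ν‖ ^ 2 + ‖ζ‖ ^ 2)) ^ N := by positivity
  have hA : (1 + Real.sqrt (‖ν‖ ^ 2 + ‖ζ‖ ^ 2)) ^ N * A ≤
      (1 + ‖ν₀‖) ^ N * (Real.exp H₀ * Real.exp H *
        (2 ^ N * ∫ x : V, ‖onePlusLapPow N (⇑g) x‖)) := by
    calc _ ≤ ((1 + ‖ν₀‖) * (1 + Real.sqrt (‖ν - ν₀‖ ^ 2 + ‖ζ‖ ^ 2))) ^ N * A := by gcongr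
      _ = (1 + ‖ν₀‖) ^ N * ((1 + Real.sqrt (‖ν - ν₀‖ ^ 2 + ‖ζ‖ ^ 2)) ^ N * A) := by
        rw [mul_pow, mul_assoc]
      _ ≤ _ := by gcongr
  rw [mul_comm, ← le_div_iff₀ hpos] at hA
  refine hA.trans (le_of_eq ?_)
  rw [div_eq_mul_inv]
  ring
end
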